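/- Let G be any connected planar graph on at least 2 vertices. Then the 3-surviving rate satisfies ρ₃(G) > 2/21. -/

import Mathlib

/-- The set of vertices on fire after `t` fire-spread rounds, when the fire breaks out
at `v` and the firefighters protect the vertices of `P s` in round `s + 1` (protection
happens just before the `s`-th spread step and is permanent). -/
def burnedSet {V : Type*} (G : SimpleGraph V) (v : V) (P : ℕ → Set V) : ℕ → Set V
  | 0 => {v}
  | t + 1 => burnedSet G v P t ∪
      {w | (∃ u ∈ burnedSet G v P t, G.Adj u w) ∧ ∀ s ≤ t, w ∉ P s}

/-- A strategy `P` is valid for the per-round budgets `b` if in each round it protects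
at most `b t` vertices, none of which are already on fire. -/
def ValidStrategy {V : Type*} (G : SimpleGraph V) (b : ℕ → ℕ) (v : V) (P : ℕ → Set V) : Prop :=
  ∀ t, (P t).Finite ∧ (P t).ncard ≤ b t ∧ Disjoint (P t) (burnedSet G v P t)

/-- `sn G b v` is the maximum number of vertices that can be saved (i.e. that never
catch fire) when the fire breaks out at `v` and the firefighters may protect at most
`b t` vertices in round `t + 1`. -/
noncomputable def sn {V : Type*} (G : SimpleGraph V) (b : ℕ → ℕ) (v : V) : ℕ :=
  sSup {m | ∃ P, ValidStrategy G b v P ∧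
    m = Nat.card {w : V | ∀ t, w ∉ burnedSet G v P t}}

/-- The surviving rate of `G` with per-round budgets `b` : the expected fraction of
vertices that can be saved when the starting vertex is chosen uniformly at random. -/
noncomputable def survivingRate {V : Type*} [Fintype V] (G : SimpleGraph V) (b : ℕ → ℕ) : ℝ :=
  (∑ v : V, (sn G b v : ℝ)) / (Fintype.card V : ℝ) ^ 2

/-- A plane embedding of a simple graph: vertices are points of the plane and edges are
simple arcs between their endpoints, such that arcs avoid all other vertices and two
arcs of distinct edges meet only in common endpoints. -/
structure PlaneEmbedding {V : Type*} (G : SimpleGraph V) where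
  pos : V → ℝ × ℝ
  arc : V → V → ℝ → ℝ × ℝ
  pos_inj : Function.Injective pos
  arc_cont : ∀ ⦃u v⦄, G.Adj u v → Continuous (arc u v)
  arc_injOn : ∀ ⦃u v⦄, G.Adj u v → Set.InjOn (arc u v) (Set.Icc 0 1)
  arc_zero : ∀ ⦃u v⦄, G.Adj u v → arc u v 0 = pos u
  arc_one : ∀ ⦃u v⦄, G.Adj u v → arc u v 1 = pos v
  arc_symm : ∀ ⦃u v⦄, G.Adj u v → ∀ t, arc v u t = arc u v (1 - t)
  arc_avoid : ∀ ⦃u v⦄, G.Adj u v → ∀ w : V, pos w ∉ arc u v '' Set.Ioo 0 1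
  arc_meet : ∀ ⦃u v x y⦄, G.Adj u v → G.Adj x y → s(u, v) ≠ s(x, y) →
      arc u v '' Set.Icc 0 1 ∩ arc x y '' Set.Icc 0 1 ⊆
        ({pos u, pos v} : Set (ℝ × ℝ)) ∩ {pos x, pos y}

/-- A graph is planar if it admits a plane embedding. -/
def IsPlanar {V : Type*} (G : SimpleGraph V) : Prop :=
  Nonempty (PlaneEmbedding G)


abbrev LP := ℤ × ℤ

/-- The six directions of the triangular lattice. -/
def ldir : Fin 6 → LP := ![(1, 0), (1, 1), (0, 1), (-1, 0), (-1, -1), (0, -1)]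

def LAdj (a b : LP) : Prop := ∃ k, b = a + ldir k

def loff : Fin 6 → LP := ![(0, 0), (0, 0), (-1, 0), (-1, -1), (-1, -1), (0, -1)]
def lty : Fin 6 → Bool := ![true, false, true, false, true, false]

/-- The triangle to the left of the dart from `a` in direction `k`. -/
def lf (a : LP) (k : Fin 6) : LP × Bool := (a + loff k, lty k)

lemma ldir_add_three (k : Fin 6) : ldir (k + 3) = - ldir k := by
  fin_cases k <;> rfl

lemma lf_next (a : LP) (k : Fin 6) : lf (a + ldir k) (k + 2) = lf a k := by
  obtain ⟨x, y⟩ := a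
  fin_cases k <;> simp [lf, loff, lty, ldir]

lemma lf_rev (a : LP) (k : Fin 6) : lf (a + ldir k) (k + 3) = lf a (k - 1) := by
  obtain ⟨x, y⟩ := a
  fin_cases k <;> simp [lf, loff, lty, ldir]

lemma lf_surj (f : LP × Bool) : ∃ a k, lf a k = f := by
  obtain ⟨a, b⟩ := f
  cases b
  · exact ⟨a, 1, by simp [lf, loff, lty]⟩
  · exact ⟨a, 0, by simp [lf, loff, lty]⟩

lemma ldir_inj {k l : Fin 6} (h : ldir k = ldir l) : k = l := by
  revert k l; decide

lemma LAdj.symm {a b : LP} (h : LAdj a b) : LAdj b a := by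
  obtain ⟨k, rfl⟩ := h
  exact ⟨k + 3, by rw [ldir_add_three]; abel⟩

lemma ldir_ne_zero : ∀ k, ldir k ≠ 0 := by decide

lemma LAdj.ne {a b : LP} (h : LAdj a b) : a ≠ b := by
  obtain ⟨k, rfl⟩ := h
  intro h
  have : ldir k = 0 := by simpa using h
  exact ldir_ne_zero k this

abbrev Z2 := ZMod 2

lemma z2_cases (x : Z2) : x = 0 ∨ x = 1 := by revert x; decide

lemma z2_add_self (x : Z2) : x + x = 0 := by revert x; decide

lemma z2_eq_of_add {x y : Z2} (h : x + y = 0) : x = y := by revert x y; decide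

lemma z2_ne_zero {x : Z2} : x ≠ 0 ↔ x = 1 := by revert x; decide

abbrev Chain := LP → LP → Z2

def Chain.Sym (c : Chain) : Prop := ∀ a b, c a b = c b a

def lbd (c : Chain) (a : LP) : Z2 := ∑ k, c a (a + ldir k)

def elemC (a b : LP) : Chain := fun p q => if (p = a ∧ q = b) ∨ (p = b ∧ q = a) then 1 else 0

def dlt (a : LP) : LP → Z2 := fun p => if p = a then 1 else 0

lemma elemC_sym (a b : LP) : (elemC a b).Sym := by
  intro p q
  unfold elemC
  congr 1
  apply propext
  tauto

lemma elemC_comm (a b : LP) : elemC a b = elemC b a := by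
  funext p q
  unfold elemC
  congr 1
  apply propext
  tauto

lemma lbd_add (c d : Chain) : lbd (c + d) = lbd c + lbd d := by
  funext a
  simp [lbd, Finset.sum_add_distrib]

lemma lbd_zero : lbd 0 = 0 := by
  funext a
  simp [lbd]

lemma lbd_smul (t : Z2) (c : Chain) : lbd (t • c) = t • lbd c := by
  funext a
  simp [lbd, Finset.mul_sum]

lemma lbd_sum {ι : Type*} (s : Finset ι) (c : ι → Chain) :
    lbd (∑ i ∈ s, c i) = ∑ i ∈ s, lbd (c i) := by
  classical
  induction s using Finset.induction_on with
  | empty => simp [lbd_zero]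
  | insert i s hi ih => rw [Finset.sum_insert hi, Finset.sum_insert hi, lbd_add, ih]

lemma Chain.Sym.add {c d : Chain} (hc : c.Sym) (hd : d.Sym) : (c + d).Sym := by
  intro a b
  simp [hc a b, hd a b]

lemma Chain.sym_zero : (0 : Chain).Sym := by
  intro a b
  simp

lemma Chain.Sym.smul {c : Chain} (t : Z2) (hc : c.Sym) : (t • c).Sym := by
  intro a b
  simp [hc a b]

lemma Chain.sym_sum {ι : Type*} (s : Finset ι) (c : ι → Chain) (h : ∀ i ∈ s, (c i).Sym) :
    (∑ i ∈ s, c i).Sym := by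
  classical
  induction s using Finset.induction_on with
  | empty => simpa using Chain.sym_zero
  | insert i s hi ih =>
    rw [Finset.sum_insert hi]
    exact (h i (by simp)).add (ih (fun j hj => h j (by simp [hj])))

lemma lbd_elemC {a b : LP} (h : LAdj a b) : lbd (elemC a b) = dlt a + dlt b := by
  have hne := h.ne
  obtain ⟨k, rfl⟩ := h
  funext p
  simp only [lbd, elemC, Pi.add_apply, dlt]
  by_cases h1 : p = a
  · subst h1
    rw [Finset.sum_eq_single k]
    · simp [hne]
    · intro l _ hl
      have : ¬ (p + ldir l = p + ldir k) := by
        intro h; exact hl (ldir_inj (by simpa using h))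
      simp [this]
      intro h; exact absurd h (by simpa using hne)
    · simp
  · by_cases h2 : p = a + ldir k
    · subst h2
      rw [Finset.sum_eq_single (k + 3)]
      · simp [ldir_add_three, h1]
      · intro l _ hl
        have : ¬ (a + ldir k + ldir l = a) := by
          intro h; apply hl; apply ldir_inj; rw [ldir_add_three]
          have : a + (ldir k + ldir l) = a := by rw [← add_assoc]; exact h
          have h3 : ldir k + ldir l = 0 := by simpa using this
          exact eq_neg_of_add_eq_zero_right h3
        simp [this]
        intro h; exact absurd h (by simpa using h1)
      · simp
    · simp [h1, h2]

/-- Primitive of a function on the integers. -/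
lemma exists_prim (f : ℤ → Z2) : ∃ F : ℤ → Z2, ∀ n, F n + F (n - 1) = f n := by
  refine ⟨fun n => if 0 ≤ n then ∑ i ∈ Finset.Icc 1 n, f i else ∑ i ∈ Finset.Icc (n + 1) 0, f i, ?_⟩
  intro n
  rcases lt_trichotomy n 0 with h | h | h
  · have h1 : ¬ (0 ≤ n) := by omega
    have h2 : ¬ (0 ≤ n - 1) := by omega
    simp only [h1, h2, if_false]
    have : Finset.Icc (n - 1 + 1) 0 = insert n (Finset.Icc (n + 1) 0) := by
      ext i; simp; omega
    rw [this, Finset.sum_insert (by simp)]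
    rw [add_comm (f n), ← add_assoc, z2_add_self, zero_add]
  · subst h
    simp
  · have h1 : 0 ≤ n := by omega
    have h2 : 0 ≤ n - 1 := by omega
    simp only [h1, h2, if_true]
    have : Finset.Icc 1 n = insert n (Finset.Icc 1 (n - 1)) := by
      ext i; simp; omega
    rw [this, Finset.sum_insert (by simp)]
    rw [add_assoc, z2_add_self, add_zero]

/-- Discrete potential on the square lattice. -/
lemma exists_pot (al ga : ℤ → ℤ → Z2)
    (h : ∀ i j, al i j + al (i - 1) j + ga i j + ga i (j - 1) = 0) :
    ∃ u : ℤ → ℤ → Z2, (∀ i j, u i j + u i (j - 1) = al i j) ∧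
      (∀ i j, u i j + u (i - 1) j = ga i j) := by
  choose Q hQ using fun i => exists_prim (al i)
  obtain ⟨R, hR⟩ := exists_prim (fun i => ga i 0)
  refine ⟨fun i j => R i + Q i j + Q i 0, ?_, ?_⟩
  · intro i j
    rw [← hQ i j]
    linear_combination z2_add_self (R i) + z2_add_self (Q i 0)
  · intro i j
    have key : ∀ j, (R i + Q i j + Q i 0) + (R (i-1) + Q (i-1) j + Q (i-1) 0) + ga i j = 0 →
        (R i + Q i (j+1) + Q i 0) + (R (i-1) + Q (i-1) (j+1) + Q (i-1) 0) + ga i (j+1) = 0 := by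
      intro j hj
      have h1 := h i (j+1)
      have h2 := hQ i (j+1)
      have h3 := hQ (i-1) (j+1)
      simp only [add_sub_cancel_right] at h1 h2 h3
      rw [← h2, ← h3] at h1
      generalize R i = a1 at *; generalize R (i-1) = a2 at *; generalize Q i j = a3 at *
      generalize Q (i-1) j = a4 at *; generalize Q i (j+1) = a5 at *
      generalize Q (i-1) (j+1) = a6 at *; generalize Q i 0 = a7 at *; generalize Q (i-1) 0 = a8 at *
      generalize ga i (j+1) = a9 at *; generalize ga i j = a10 at *
      have e1 := z2_add_self a3
      have e2 := z2_add_self a4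
      have e3 := z2_add_self a10
      linear_combination hj + h1 - e1 - e2 - e3
    have key' : ∀ j, (R i + Q i j + Q i 0) + (R (i-1) + Q (i-1) j + Q (i-1) 0) + ga i j = 0 →
        (R i + Q i (j-1) + Q i 0) + (R (i-1) + Q (i-1) (j-1) + Q (i-1) 0) + ga i (j-1) = 0 := by
      intro j hj
      have h1 := h i j
      have h2 := hQ i j
      have h3 := hQ (i-1) j
      rw [← h2, ← h3] at h1
      generalize R i = a1 at *; generalize R (i-1) = a2 at *; generalize Q i j = a3 at *
      generalize Q (i-1) j = a4 at *; generalize Q i (j-1) = a5 at *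
      generalize Q (i-1) (j-1) = a6 at *; generalize Q i 0 = a7 at *; generalize Q (i-1) 0 = a8 at *
      generalize ga i (j-1) = a9 at *; generalize ga i j = a10 at *
      have e1 := z2_add_self a3
      have e2 := z2_add_self a4
      have e3 := z2_add_self a10
      linear_combination hj + h1 - e1 - e2 - e3
    have all : ∀ j, (R i + Q i j + Q i 0) + (R (i-1) + Q (i-1) j + Q (i-1) 0) + ga i j = 0 := by
      intro j
      induction j using Int.induction_on with
      | zero =>
        have h1 := hR i
        rw [← h1]
        linear_combination z2_add_self (Q i 0) + z2_add_self (Q (i-1) 0) + z2_add_self (R i)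
          + z2_add_self (R (i-1))
      | succ n ih => exact key _ ih
      | pred n ih => exact key' _ ih
    exact z2_eq_of_add (all j)

lemma fin6_a : ∀ k : Fin 6, k + 3 - 1 = k + 2 := by decide

lemma exact_chain (c : Chain) (hs : c.Sym) (hb : lbd c = 0) :
    ∃ s : LP × Bool → Z2, ∀ a k, c a (a + ldir k) = s (lf a k) + s (lf a (k - 1)) := by
  set cH : ℤ → ℤ → Z2 := fun i j => c (i, j) (i + 1, j) with hcH
  set cD : ℤ → ℤ → Z2 := fun i j => c (i, j) (i + 1, j + 1) with hcD
  set cV : ℤ → ℤ → Z2 := fun i j => c (i, j) (i, j + 1) with hcV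
  have r3 : ∀ i j, c (i, j) (i - 1, j) = cH (i - 1) j := by
    intro i j; rw [hs]; simp [hcH]
  have r4 : ∀ i j, c (i, j) (i - 1, j - 1) = cD (i - 1) (j - 1) := by
    intro i j; rw [hs]; simp [hcD]
  have r5 : ∀ i j, c (i, j) (i, j - 1) = cV i (j - 1) := by
    intro i j; rw [hs]; simp [hcV]
  have hcl : ∀ i j, cH i j + cD i j + cV i j + cH (i-1) j + cD (i-1) (j-1) + cV i (j-1) = 0 := by
    intro i j
    have := congrFun hb (i, j)
    simp only [lbd, Fin.sum_univ_six, ldir] at this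
    simp [← sub_eq_add_neg, r3, r4, r5] at this
    exact this
  obtain ⟨u, hu1, hu2⟩ := exists_pot (fun i j => cH i j + cD i (j-1)) (fun i j => cV i j + cD i j) (by
    intro i j
    linear_combination hcl i j + z2_add_self (cD i (j-1)))
  set s : LP × Bool → Z2 := fun f => if f.2 then u f.1.1 f.1.2 else u f.1.1 f.1.2 + cD f.1.1 f.1.2 with hsdef
  refine ⟨s, ?_⟩
  have H0 : ∀ i j, cH i j = s (lf (i, j) 0) + s (lf (i, j) 5) := by
    intro i j
    have := hu1 i j
    simp [hsdef, lf, loff, lty, ← sub_eq_add_neg]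
    linear_combination -this - z2_add_self (cD i (j-1))
  have H1 : ∀ i j, cD i j = s (lf (i, j) 1) + s (lf (i, j) 0) := by
    intro i j
    simp [hsdef, lf, loff, lty]
    linear_combination -z2_add_self (u i j)
  have H2 : ∀ i j, cV i j = s (lf (i, j) 2) + s (lf (i, j) 1) := by
    intro i j
    have := hu2 i j
    simp [hsdef, lf, loff, lty, ← sub_eq_add_neg]
    linear_combination -this - z2_add_self (cD i j)
  have main : ∀ a, ∀ k : Fin 6, k = 0 ∨ k = 1 ∨ k = 2 →
      c a (a + ldir k) = s (lf a k) + s (lf a (k - 1)) := by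
    rintro ⟨i, j⟩ k (rfl | rfl | rfl)
    · have := H0 i j
      have e : (0 : Fin 6) - 1 = 5 := rfl
      rw [e]
      simpa [hcH, ldir] using this
    · have := H1 i j
      simpa [hcD, ldir] using this
    · have := H2 i j
      simpa [hcV, ldir] using this
  intro a k
  by_cases hk : k = 0 ∨ k = 1 ∨ k = 2
  · exact main a k hk
  · have hk' : k + 3 = 0 ∨ k + 3 = 1 ∨ k + 3 = 2 := by
      revert hk; revert k; decide
    have h1 := main (a + ldir k) (k + 3) hk'
    have e1 : a + ldir k + ldir (k + 3) = a := by rw [ldir_add_three]; abel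
    rw [e1, hs] at h1
    have e2 : k + 3 - 1 = k + 2 := fin6_a k
    rw [h1, lf_rev, e2, lf_next, add_comm]

/-- The coboundary relation: `c` is the boundary chain of the face function `s`. -/
def IsBd (c : Chain) (s : LP × Bool → Z2) : Prop :=
  ∀ a k, c a (a + ldir k) = s (lf a k) + s (lf a (k - 1))

lemma IsBd.add {c d : Chain} {s t : LP × Bool → Z2} (h : IsBd c s) (h' : IsBd d t) :
    IsBd (c + d) (s + t) := by
  intro a k
  simp only [Pi.add_apply, h a k, h' a k]
  ring

/-- All faces around a free vertex have the same value. -/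
lemma free_vertex {c : Chain} {s : LP × Bool → Z2} (h : IsBd c s) {a : LP}
    (ha : ∀ k, c a (a + ldir k) = 0) (k : Fin 6) : s (lf a k) = s (lf a 0) := by
  have st : ∀ k, s (lf a k) = s (lf a (k - 1)) := fun k => z2_eq_of_add (by rw [← h a k, ha k])
  have h1 := st 1
  have h2 := st 2
  have h3 := st 3
  have h4 := st 4
  have h5 := st 5
  have e1 : (1 : Fin 6) - 1 = 0 := rfl
  have e2 : (2 : Fin 6) - 1 = 1 := rfl
  have e3 : (3 : Fin 6) - 1 = 2 := rfl
  have e4 : (4 : Fin 6) - 1 = 3 := rfl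
  have e5 : (5 : Fin 6) - 1 = 4 := rfl
  rw [e1] at h1; rw [e2] at h2; rw [e3] at h3; rw [e4] at h4; rw [e5] at h5
  fin_cases k
  · rfl
  · exact h1
  · exact h2.trans h1
  · exact h3.trans (h2.trans h1)
  · exact h4.trans (h3.trans (h2.trans h1))
  · exact h5.trans (h4.trans (h3.trans (h2.trans h1)))

lemma free_step {c : Chain} {s : LP × Bool → Z2} (h : IsBd c s) {a b : LP}
    (ha : ∀ k, c a (a + ldir k) = 0) (hb : ∀ k, c b (b + ldir k) = 0) (hab : LAdj a b) :
    s (lf a 0) = s (lf b 0) := by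
  obtain ⟨k, rfl⟩ := hab
  rw [← free_vertex h ha k, ← free_vertex h hb (k + 2), lf_next]

/-- Connectivity inside a set of lattice points. -/
def LC (Y : Set LP) (a b : LP) : Prop := Relation.ReflTransGen (fun p q => q ∈ Y ∧ LAdj p q) a b

def LConn (Y : Set LP) : Prop := ∀ a ∈ Y, ∀ b ∈ Y, LC Y a b

lemma LC.mono {Y Z : Set LP} (h : Y ⊆ Z) {a b : LP} (hab : LC Y a b) : LC Z a b :=
  Relation.ReflTransGen.mono (fun _ _ hh => ⟨h hh.1, hh.2⟩) _ _ hab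

lemma LC.symm {Y : Set LP} {a b : LP} (ha : a ∈ Y) (h : LC Y a b) : LC Y b a ∧ b ∈ Y := by
  induction h with
  | refl => exact ⟨Relation.ReflTransGen.refl, ha⟩
  | tail _ h2 ih =>
    exact ⟨Relation.ReflTransGen.head ⟨ih.2, h2.2.symm⟩ ih.1, h2.1⟩

lemma LC.trans {Y : Set LP} {a b c : LP} (h : LC Y a b) (h' : LC Y b c) : LC Y a c :=
  Relation.ReflTransGen.trans h h'

lemma lconn_of_base {Y : Set LP} (a : LP) (ha : a ∈ Y) (h : ∀ b ∈ Y, LC Y a b) : LConn Y := by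
  intro b hb c hc
  exact ((h b hb).symm ha).1.trans (h c hc)

lemma free_const {c : Chain} {s : LP × Bool → Z2} (h : IsBd c s) {Y : Set LP} (hY : LConn Y)
    (hf : ∀ a ∈ Y, ∀ k, c a (a + ldir k) = 0) {a b : LP} (ha : a ∈ Y) (hb : b ∈ Y) (k l : Fin 6) :
    s (lf a k) = s (lf b l) := by
  rw [free_vertex h (hf a ha), free_vertex h (hf b hb)]
  have := hY a ha b hb
  clear hb
  induction this with
  | refl => rfl
  | tail h1 h2 ih =>
    have hm := (LC.symm ha h1).2
    exact ih.trans (free_step h (hf _ hm) (hf _ h2.1) h2.2)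

lemma LConn.union {X Y : Set LP} (hX : LConn X) (hY : LConn Y) {a b : LP} (ha : a ∈ X) (hb : b ∈ Y)
    (hab : LAdj a b) : LConn (X ∪ Y) := by
  apply lconn_of_base a (Or.inl ha)
  rintro c (hc | hc)
  · exact (hX a ha c hc).mono Set.subset_union_left
  · exact (Relation.ReflTransGen.single ⟨Or.inr hb, hab⟩ : LC (X ∪ Y) a b).trans
      ((hY b hb c hc).mono Set.subset_union_right)

lemma lconn_singleton (a : LP) : LConn {a} := by
  rintro b rfl c rfl
  exact Relation.ReflTransGen.refl

lemma lc_hline {Y : Set LP} (y : ℤ) (x1 : ℤ) (x2 : ℤ) (h : x1 ≤ x2)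
    (hY : ∀ x, x1 ≤ x → x ≤ x2 → (x, y) ∈ Y) : LC Y (x1, y) (x2, y) := by
  induction x2, h using Int.leInduction with
  | base => exact Relation.ReflTransGen.refl
  | succ n hn ih =>
    exact (ih (fun x h1 h2 => hY x h1 (by omega))).tail
      ⟨hY _ (by omega) le_rfl, ⟨0, by simp [ldir]⟩⟩

lemma lc_vline {Y : Set LP} (x : ℤ) (y1 : ℤ) (y2 : ℤ) (h : y1 ≤ y2)
    (hY : ∀ y, y1 ≤ y → y ≤ y2 → (x, y) ∈ Y) : LC Y (x, y1) (x, y2) := by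
  induction y2, h using Int.leInduction with
  | base => exact Relation.ReflTransGen.refl
  | succ n hn ih =>
    exact (ih (fun x h1 h2 => hY x h1 (by omega))).tail
      ⟨hY _ (by omega) le_rfl, ⟨2, by simp [ldir]⟩⟩

lemma lc_h {Y : Set LP} (y : ℤ) (x1 x2 : ℤ)
    (hY : ∀ x, min x1 x2 ≤ x → x ≤ max x1 x2 → (x, y) ∈ Y) : LC Y (x1, y) (x2, y) := by
  rcases le_total x1 x2 with h | h
  · exact lc_hline y x1 x2 h (by simpa [h] using hY)
  · refine (LC.symm ?_ (lc_hline y x2 x1 h (by simpa [h] using hY))).1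
    exact hY _ (by simp) (by simp)

lemma lc_v {Y : Set LP} (x : ℤ) (y1 y2 : ℤ)
    (hY : ∀ y, min y1 y2 ≤ y → y ≤ max y1 y2 → (x, y) ∈ Y) : LC Y (x, y1) (x, y2) := by
  rcases le_total y1 y2 with h | h
  · exact lc_vline x y1 y2 h (by simpa [h] using hY)
  · refine (LC.symm ?_ (lc_vline x y2 y1 h (by simpa [h] using hY))).1
    exact hY _ (by simp) (by simp)

lemma lconn_univ : LConn Set.univ := by
  rintro ⟨x, y⟩ - ⟨x', y'⟩ -
  exact (lc_h (Y := Set.univ) y x x' (fun _ _ _ => Set.mem_univ _)).trans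
    (lc_v x' y y' (fun _ _ _ => Set.mem_univ _))

def LBox (N : ℕ) : Set LP := {p | -(N : ℤ) ≤ p.1 ∧ p.1 ≤ N ∧ -(N : ℤ) ≤ p.2 ∧ p.2 ≤ N}

lemma lbox_finite (N : ℕ) : (LBox N).Finite := by
  apply ((Set.finite_Icc (-(N : ℤ)) N).prod (Set.finite_Icc (-(N : ℤ)) N)).subset
  rintro ⟨x, y⟩ h
  simp only [LBox, Set.mem_ofPred_eq] at h
  simp; omega

lemma lbox_conn (N : ℕ) : LConn (LBox N) := by
  rintro ⟨x, y⟩ h ⟨x', y'⟩ h'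
  simp only [LBox, Set.mem_ofPred_eq] at h h'
  refine (lc_h y x x' ?_).trans (lc_v x' y y' ?_)
  · intro z h1 h2
    simp only [LBox, Set.mem_ofPred_eq]; omega
  · intro z h1 h2
    simp only [LBox, Set.mem_ofPred_eq]; omega

lemma lout_conn (N : ℕ) : LConn (LBox N)ᶜ := by
  have mem : ∀ x y : ℤ, (x, y) ∈ (LBox N)ᶜ ↔ (x < -N ∨ N < x ∨ y < -N ∨ (N : ℤ) < y) := by
    intro x y
    simp only [LBox, Set.mem_compl_iff, Set.mem_ofPred_eq]; omega
  have hb : ((N : ℤ) + 1, (N : ℤ) + 1) ∈ (LBox N)ᶜ := by rw [mem]; omega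
  refine lconn_of_base _ hb ?_
  rintro ⟨x, y⟩ h
  refine (LC.symm h ?_).1
  rw [mem] at h
  have A : ∀ y : ℤ, LC (LBox N)ᶜ (N + 1, y) (N + 1, N + 1) := fun y =>
    lc_v _ _ _ (fun z _ _ => by rw [mem]; omega)
  have B : ∀ x : ℤ, LC (LBox N)ᶜ (x, N + 1) (N + 1, N + 1) := fun y =>
    lc_h _ _ _ (fun z _ _ => by rw [mem]; omega)
  by_cases h1 : x < -N ∨ N < x
  · exact (lc_v x y (N + 1) (fun z _ _ => by rw [mem]; omega)).trans (B x)
  · exact (lc_h y x (N + 1) (fun z _ _ => by rw [mem]; omega)).trans (A y)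

/-- A path chain inside a connected set. -/
lemma exists_path_chain {Y : Set LP} {a b : LP} (ha : a ∈ Y) (h : LC Y a b) :
    ∃ c : Chain, c.Sym ∧ lbd c = dlt a + dlt b ∧ ∀ p q, c p q ≠ 0 → p ∈ Y ∧ q ∈ Y := by
  induction h with
  | refl =>
    refine ⟨0, Chain.sym_zero, ?_, by simp⟩
    rw [lbd_zero]; funext p; simp [z2_add_self]
  | @tail b d h1 h2 ih =>
    obtain ⟨c, hc1, hc2, hc3⟩ := ih
    have hm := (LC.symm ha h1).2
    refine ⟨c + elemC b d, hc1.add (elemC_sym _ _), ?_, ?_⟩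
    · rw [lbd_add, hc2, lbd_elemC h2.2]
      funext p
      simp only [Pi.add_apply]
      linear_combination z2_add_self (dlt b p)
    · intro p q hpq
      by_cases h3 : c p q = 0
      · simp only [Pi.add_apply, h3, zero_add, elemC] at hpq
        split_ifs at hpq with h4
        · rcases h4 with ⟨rfl, rfl⟩ | ⟨rfl, rfl⟩
          · exact ⟨hm, h2.1⟩
          · exact ⟨h2.1, hm⟩
        · exact absurd rfl hpq
      · exact hc3 p q h3


structure Lab (V : Type) where
  lb : LP → V
  conn : ∀ v, LConn {a | lb a = v}
  surj : ∀ v, ∃ a, lb a = v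
  N : ℕ
  o : V
  out : ∀ a, a ∉ LBox N → lb a = o

namespace Lab

variable {V : Type} (L : Lab V)

def gr : SimpleGraph V where
  Adj x y := x ≠ y ∧ ∃ a b, LAdj a b ∧ L.lb a = x ∧ L.lb b = y
  symm := ⟨fun _ _ h => ⟨h.1.symm, by
    obtain ⟨a, b, h1, h2, h3⟩ := h.2
    exact ⟨b, a, h1.symm, h3, h2⟩⟩⟩
  loopless := ⟨fun _ h => h.1 rfl⟩

lemma gr_adj_of {a b : LP} (h : LAdj a b) (hn : L.lb a ≠ L.lb b) : L.gr.Adj (L.lb a) (L.lb b) :=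
  ⟨hn, a, b, h, rfl, rfl⟩

lemma exists_bs : ∃ bs : V → LP, (∀ x, L.lb (bs x) = x) ∧ bs L.o ∉ LBox L.N := by
  classical
  choose b hb using L.surj
  have hout : ((L.N : ℤ) + 1, (0 : ℤ)) ∉ LBox L.N := by
    simp only [LBox, Set.mem_ofPred_eq]; omega
  refine ⟨fun x => if x = L.o then (L.N + 1, 0) else b x, ?_, ?_⟩
  · intro x
    by_cases h : x = L.o
    · simp only [h, if_true]
      exact L.out _ hout
    · simp only [h, if_false]
      exact hb x
  · simpa using hout

noncomputable def bs : V → LP := L.exists_bs.choose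

lemma lb_bs (x : V) : L.lb (L.bs x) = x := L.exists_bs.choose_spec.1 x

lemma bs_o : L.bs L.o ∉ LBox L.N := L.exists_bs.choose_spec.2

lemma exists_rh (a : LP) : ∃ c : Chain, c.Sym ∧ lbd c = dlt a + dlt (L.bs (L.lb a)) ∧
    (∀ p q, c p q ≠ 0 → L.lb p = L.lb a ∧ L.lb q = L.lb a) ∧
    (a ∉ LBox L.N → ∀ p q, c p q ≠ 0 → p ∉ LBox L.N ∧ q ∉ LBox L.N) := by
  by_cases ha : a ∈ LBox L.N
  · obtain ⟨c, h1, h2, h3⟩ := exists_path_chain (Y := {p | L.lb p = L.lb a}) (a := a)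
      (b := L.bs (L.lb a)) rfl (L.conn _ _ rfl _ (L.lb_bs _))
    exact ⟨c, h1, h2, h3, fun h => absurd ha h⟩
  · have e := L.out a ha
    obtain ⟨c, h1, h2, h3⟩ := exists_path_chain (Y := (LBox L.N)ᶜ) (a := a)
      (b := L.bs (L.lb a)) ha (lout_conn _ _ ha _ (by rw [e]; exact L.bs_o))
    refine ⟨c, h1, h2, ?_, fun _ => h3⟩
    intro p q h
    rw [e]
    exact ⟨L.out _ (h3 p q h).1, L.out _ (h3 p q h).2⟩

noncomputable def rh (a : LP) : Chain := (L.exists_rh a).choose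

lemma rh_sym (a : LP) : (L.rh a).Sym := (L.exists_rh a).choose_spec.1
lemma rh_lbd (a : LP) : lbd (L.rh a) = dlt a + dlt (L.bs (L.lb a)) :=
  (L.exists_rh a).choose_spec.2.1
lemma rh_supp {a p q : LP} (h : L.rh a p q ≠ 0) : L.lb p = L.lb a ∧ L.lb q = L.lb a :=
  (L.exists_rh a).choose_spec.2.2.1 p q h
lemma rh_out {a p q : LP} (ha : a ∉ LBox L.N) (h : L.rh a p q ≠ 0) :
    p ∉ LBox L.N ∧ q ∉ LBox L.N :=
  (L.exists_rh a).choose_spec.2.2.2 ha p q h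

lemma exists_rep (x y : V) : ∃ d : LP × Fin 6, L.gr.Adj x y →
    L.lb d.1 = x ∧ L.lb (d.1 + ldir d.2) = y := by
  by_cases h : L.gr.Adj x y
  · obtain ⟨a, b, ⟨k, rfl⟩, h1, h2⟩ := h.2
    exact ⟨(a, k), fun _ => ⟨h1, h2⟩⟩
  · exact ⟨(0, 0), fun h' => absurd h' h⟩

/-- Representing dart of a pair of adjacent labels. -/
noncomputable def rep (x y : V) : LP × Fin 6 := (L.exists_rep x y).choose
noncomputable def ra (x y : V) : LP := (L.rep x y).1
noncomputable def rk (x y : V) : Fin 6 := (L.rep x y).2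
noncomputable def rb (x y : V) : LP := L.ra x y + ldir (L.rk x y)

lemma lb_ra {x y : V} (h : L.gr.Adj x y) : L.lb (L.ra x y) = x :=
  ((L.exists_rep x y).choose_spec h).1
lemma lb_rb {x y : V} (h : L.gr.Adj x y) : L.lb (L.rb x y) = y :=
  ((L.exists_rep x y).choose_spec h).2
lemma rab (x y : V) : LAdj (L.ra x y) (L.rb x y) := ⟨_, rfl⟩

noncomputable def ec (x y : V) : Chain :=
  L.rh (L.ra x y) + elemC (L.ra x y) (L.rb x y) + L.rh (L.rb x y)

lemma ec_sym (x y : V) : (L.ec x y).Sym :=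
  ((L.rh_sym _).add (elemC_sym _ _)).add (L.rh_sym _)

lemma ec_lbd {x y : V} (h : L.gr.Adj x y) :
    lbd (L.ec x y) = dlt (L.bs x) + dlt (L.bs y) := by
  unfold ec
  rw [lbd_add, lbd_add, rh_lbd, rh_lbd, lbd_elemC (L.rab x y), L.lb_ra h, L.lb_rb h]
  funext p
  simp only [Pi.add_apply]
  linear_combination z2_add_self (dlt (L.ra x y) p) + z2_add_self (dlt (L.rb x y) p)

lemma elemC_ne {a b p q : LP} (h : elemC a b p q ≠ 0) : (p = a ∧ q = b) ∨ (p = b ∧ q = a) := by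
  by_contra h'
  exact h (by simp [elemC, h'])

lemma ec_inter {x y : V} (h : L.gr.Adj x y) {p q : LP} (hpq : L.lb p ≠ L.lb q) :
    L.ec x y p q = elemC (L.ra x y) (L.rb x y) p q := by
  have h1 : ∀ a, L.rh a p q = 0 := by
    intro a
    by_contra hh
    have := L.rh_supp hh
    exact hpq (this.1.trans this.2.symm)
  simp [ec, h1]

lemma ec_supp {x y : V} (h : L.gr.Adj x y) {p q : LP} (hpq : L.ec x y p q ≠ 0) :
    (L.lb p = x ∨ L.lb p = y) := by
  by_contra hc
  push Not at hc
  apply hpq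
  have h1 : L.rh (L.ra x y) p q = 0 := by
    by_contra hh
    exact hc.1 ((L.rh_supp hh).1.trans (L.lb_ra h))
  have h2 : L.rh (L.rb x y) p q = 0 := by
    by_contra hh
    exact hc.2 ((L.rh_supp hh).1.trans (L.lb_rb h))
  have h3 : elemC (L.ra x y) (L.rb x y) p q = 0 := by
    by_contra hh
    rcases elemC_ne hh with ⟨rfl, _⟩ | ⟨rfl, _⟩
    · exact hc.1 (L.lb_ra h)
    · exact hc.2 (L.lb_rb h)
  simp [ec, h1, h2, h3]

noncomputable def sval (s : LP × Bool → Z2) (x : V) : Z2 := s (lf (L.bs x) 0)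

lemma side {C : Chain} {s : LP × Bool → Z2} (hB : IsBd C s) {Λ : Set V}
    (hs : ∀ p q, C p q ≠ 0 → L.lb p ∈ Λ) (a : LP) (ha : L.lb a ∉ Λ) (k : Fin 6) :
    s (lf a k) = L.sval s (L.lb a) := by
  refine free_const hB (L.conn (L.lb a)) ?_ rfl (L.lb_bs _) k 0
  intro b hb l
  by_contra hh
  have := hs _ _ hh
  have hb' : L.lb b = L.lb a := hb
  rw [hb'] at this
  exact ha this

lemma side_adj {C : Chain} {s : LP × Bool → Z2} (hB : IsBd C s) {Λ : Set V}
    (hs : ∀ p q, C p q ≠ 0 → L.lb p ∈ Λ) {x y : V} (hxy : L.gr.Adj x y) (hx : x ∉ Λ) (hy : y ∉ Λ) :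
    L.sval s x = L.sval s y := by
  obtain ⟨_, a, b, ⟨k, rfl⟩, rfl, rfl⟩ := hxy
  rw [← L.side hB hs a hx k, ← L.side hB hs _ hy (k + 2), lf_next]

lemma fib_fin (x : V) : {a | L.lb a = x}.Finite ∨ {a | L.lb a = x}ᶜ.Finite := by
  by_cases h : x = L.o
  · right
    apply (lbox_finite L.N).subset
    intro a ha
    by_contra hb
    exact ha (by rw [h]; exact L.out a hb)
  · left
    apply (lbox_finite L.N).subset
    intro a ha
    by_contra hb
    have ha' : L.lb a = x := ha
    exact h (by rw [← ha', L.out a hb])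

end Lab

lemma fin6_b : ∀ k : Fin 6, k + 3 ≠ k := by decide
lemma fin6_c : ∀ k : Fin 6, k + 3 + 3 = k := by decide

lemma sum_around (r : LP × Bool → Z2) (a : LP) : ∑ k, (r (lf a k) + r (lf a (k - 1))) = 0 := by
  rw [Finset.sum_add_distrib]
  have : ∑ k, r (lf a (k - 1)) = ∑ k, r (lf a k) :=
    Equiv.sum_comp (Equiv.subRight (1 : Fin 6)) (fun k => r (lf a k))
  rw [this, z2_add_self]

lemma one_dart_fin (Y : Set LP) (hY : Y.Finite) (r : LP × Bool → Z2) (a0 : LP) (k0 : Fin 6)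
    (ha : a0 ∈ Y) (hb : a0 + ldir k0 ∉ Y) (h1 : r (lf a0 k0) + r (lf a0 (k0 - 1)) ≠ 0)
    (h : ∀ a k, a ∈ Y → a + ldir k ∉ Y → (a, k) ≠ (a0, k0) →
      r (lf a k) + r (lf a (k - 1)) = 0) : False := by
  classical
  set w : LP × Fin 6 → Z2 := fun d => r (lf d.1 d.2) + r (lf d.1 (d.2 - 1)) with hw
  have tot : ∑ d ∈ hY.toFinset ×ˢ (Finset.univ : Finset (Fin 6)), w d = 0 := by
    rw [Finset.sum_product]
    exact Finset.sum_eq_zero (fun a _ => sum_around r a)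
  rw [← Finset.sum_filter_add_sum_filter_not _ (fun d : LP × Fin 6 => d.1 + ldir d.2 ∈ Y)] at tot
  have s1 : ∑ d ∈ (hY.toFinset ×ˢ (Finset.univ : Finset (Fin 6))).filter
      (fun d : LP × Fin 6 => d.1 + ldir d.2 ∈ Y), w d = 0 := by
    refine Finset.sum_involution (fun d _ => (d.1 + ldir d.2, d.2 + 3)) ?_ ?_ ?_ ?_
    · rintro ⟨a, k⟩ _
      simp only [hw]
      rw [lf_rev, fin6_a, lf_next]
      linear_combination z2_add_self (r (lf a k)) + z2_add_self (r (lf a (k - 1)))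
    · rintro ⟨a, k⟩ _ _ h
      simp only [Prod.mk.injEq] at h
      exact fin6_b k h.2
    · rintro ⟨a, k⟩ hd
      simp only [Finset.mem_filter, Finset.mem_product, Set.Finite.mem_toFinset, Finset.mem_univ,
        and_true] at hd ⊢
      refine ⟨hd.2, ?_⟩
      rw [ldir_add_three]
      simpa using hd.1
    · rintro ⟨a, k⟩ _
      simp only [Prod.mk.injEq]
      exact ⟨by rw [ldir_add_three]; simp, fin6_c k⟩
  have s2 : ∑ d ∈ (hY.toFinset ×ˢ (Finset.univ : Finset (Fin 6))).filter
      (fun d : LP × Fin 6 => ¬ (d.1 + ldir d.2 ∈ Y)), w d = w (a0, k0) := by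
    refine Finset.sum_eq_single_of_mem (a0, k0) (by simp [ha, hb]) ?_
    rintro ⟨a, k⟩ hd hne
    simp only [Finset.mem_filter, Finset.mem_product, Set.Finite.mem_toFinset, Finset.mem_univ,
        and_true] at hd
    exact h a k hd.1 hd.2 hne
  rw [s1, s2, zero_add] at tot
  exact h1 tot

lemma one_dart (Y : Set LP) (hY : Y.Finite ∨ Yᶜ.Finite) (r : LP × Bool → Z2) (a0 : LP) (k0 : Fin 6)
    (ha : a0 ∈ Y) (hb : a0 + ldir k0 ∉ Y) (h1 : r (lf a0 k0) + r (lf a0 (k0 - 1)) ≠ 0)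
    (h : ∀ a k, a ∈ Y → a + ldir k ∉ Y → (a, k) ≠ (a0, k0) →
      r (lf a k) + r (lf a (k - 1)) = 0) : False := by
  rcases hY with hY | hY
  · exact one_dart_fin Y hY r a0 k0 ha hb h1 h
  · have rev : ∀ (a : LP) (k : Fin 6), r (lf (a + ldir k) (k + 3)) + r (lf (a + ldir k) (k + 3 - 1))
        = r (lf a k) + r (lf a (k - 1)) := by
      intro a k
      rw [lf_rev, fin6_a, lf_next, add_comm]
    have back : ∀ (a : LP) (k : Fin 6), a + ldir k + ldir (k + 3) = a := by
      intro a k; rw [ldir_add_three]; simp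
    refine one_dart_fin Yᶜ hY r (a0 + ldir k0) (k0 + 3) hb ?_ ?_ ?_
    · rw [back]; simpa using ha
    · rw [rev]; exact h1
    · intro a k h2 h3 h4
      rw [← rev]
      refine h _ _ (by simpa using h3) (by rw [back]; exact h2) ?_
      intro h5
      simp only [Prod.mk.injEq] at h5
      apply h4
      rw [← h5.1, ← h5.2, back, fin6_c]


namespace Lab

variable {V : Type} (L : Lab V)

lemma exists_ends (e : L.gr.edgeSet) : ∃ d : V × V, L.gr.Adj d.1 d.2 ∧ e.1 = s(d.1, d.2) := by
  obtain ⟨e, he⟩ := e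
  induction e using Sym2.ind with
  | _ x y => exact ⟨(x, y), he, rfl⟩

noncomputable def ex (e : L.gr.edgeSet) : V := (L.exists_ends e).choose.1
noncomputable def ey (e : L.gr.edgeSet) : V := (L.exists_ends e).choose.2
lemma exy (e : L.gr.edgeSet) : L.gr.Adj (L.ex e) (L.ey e) := (L.exists_ends e).choose_spec.1
lemma exy_eq (e : L.gr.edgeSet) : e.1 = s(L.ex e, L.ey e) := (L.exists_ends e).choose_spec.2

noncomputable def ea (e : L.gr.edgeSet) : LP := L.ra (L.ex e) (L.ey e)
noncomputable def ek (e : L.gr.edgeSet) : Fin 6 := L.rk (L.ex e) (L.ey e)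
noncomputable def eb (e : L.gr.edgeSet) : LP := L.ea e + ldir (L.ek e)

lemma lb_ea (e : L.gr.edgeSet) : L.lb (L.ea e) = L.ex e := L.lb_ra (L.exy e)
lemma lb_eb (e : L.gr.edgeSet) : L.lb (L.eb e) = L.ey e := L.lb_rb (L.exy e)

def Dart (e : L.gr.edgeSet) (a : LP) (k : Fin 6) : Prop :=
  (a = L.ea e ∧ k = L.ek e) ∨ (a = L.eb e ∧ k = L.ek e + 3)

variable {L}

lemma Dart.face {e : L.gr.edgeSet} {a : LP} {k : Fin 6} (h : L.Dart e a k) (r : LP × Bool → Z2) :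
    r (lf a k) + r (lf a (k - 1)) =
      r (lf (L.ea e) (L.ek e)) + r (lf (L.ea e) (L.ek e - 1)) := by
  rcases h with ⟨rfl, rfl⟩ | ⟨rfl, rfl⟩
  · rfl
  · unfold eb
    rw [lf_rev, fin6_a, lf_next, add_comm]

lemma dart_of_elem {e : L.gr.edgeSet} {a : LP} {k : Fin 6}
    (h : elemC (L.ea e) (L.eb e) a (a + ldir k) ≠ 0) : L.Dart e a k := by
  rcases elemC_ne h with ⟨rfl, h2⟩ | ⟨rfl, h2⟩
  · left
    refine ⟨rfl, ldir_inj ?_⟩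
    simpa [eb] using h2
  · right
    refine ⟨rfl, ldir_inj ?_⟩
    rw [ldir_add_three]
    have : L.ea e + (ldir (L.ek e) + ldir k) = L.ea e := by
      rw [← add_assoc]; exact h2
    have h3 : ldir (L.ek e) + ldir k = 0 := by simpa using this
    exact eq_neg_of_add_eq_zero_right h3

lemma Dart.lb_mem {e : L.gr.edgeSet} {a : LP} {k : Fin 6} (h : L.Dart e a k) : L.lb a ∈ e.1 := by
  rw [exy_eq]
  rcases h with ⟨rfl, rfl⟩ | ⟨rfl, rfl⟩
  · simp [lb_ea]
  · simp [lb_eb]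

lemma Dart.other {e : L.gr.edgeSet} {a : LP} {k : Fin 6} (h : L.Dart e a k) :
    L.lb (a + ldir k) ≠ L.lb a := by
  have hne := (L.exy e).ne
  rcases h with ⟨rfl, rfl⟩ | ⟨rfl, rfl⟩
  · have := L.lb_eb e
    unfold eb at this
    rw [this, lb_ea]; exact hne.symm
  · rw [lb_eb, ldir_add_three]
    simp [eb, lb_ea]; exact hne

lemma Dart.uniq {e : L.gr.edgeSet} {a a' : LP} {k k' : Fin 6} (h : L.Dart e a k)
    (h' : L.Dart e a' k') (hl : L.lb a = L.lb a') : (a, k) = (a', k') := by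
  have hne := (L.exy e).ne
  rcases h with ⟨rfl, rfl⟩ | ⟨rfl, rfl⟩ <;> rcases h' with ⟨rfl, rfl⟩ | ⟨rfl, rfl⟩
  · rfl
  · rw [lb_ea, lb_eb] at hl; exact absurd hl hne
  · rw [lb_ea, lb_eb] at hl; exact absurd hl.symm hne
  · rfl

lemma exists_dart {e : L.gr.edgeSet} {x : V} (h : x ∈ e.1) : ∃ a k, L.Dart e a k ∧ L.lb a = x := by
  rw [exy_eq, Sym2.mem_iff] at h
  rcases h with rfl | rfl
  · exact ⟨_, _, Or.inl ⟨rfl, rfl⟩, L.lb_ea e⟩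
  · exact ⟨_, _, Or.inr ⟨rfl, rfl⟩, L.lb_eb e⟩

variable (L)

lemma elem_ext {e e' : L.gr.edgeSet} (h : elemC (L.ea e') (L.eb e') (L.ea e) (L.eb e) ≠ 0) :
    e' = e := by
  apply Subtype.ext
  rw [exy_eq, exy_eq, ← lb_ea, ← lb_eb, ← lb_ea, ← lb_eb]
  rcases elemC_ne h with ⟨h1, h2⟩ | ⟨h1, h2⟩
  · rw [h1, h2]
  · rw [h1, h2, Sym2.eq_swap]

open Classical in
/-- Vertex-edge boundary map. -/
noncomputable def ebd [Fintype V] : (L.gr.edgeSet → Z2) →ₗ[Z2] (V → Z2) where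
  toFun z := fun v => ∑ e, z e * (if v ∈ e.1 then 1 else 0)
  map_add' z w := by
    funext v
    simp only [Pi.add_apply, add_mul, Finset.sum_add_distrib]
  map_smul' t z := by
    funext v
    simp only [Pi.smul_apply, smul_eq_mul, RingHom.id_apply, Finset.mul_sum, mul_assoc]

lemma mem_two [DecidableEq V] (e : L.gr.edgeSet) (v : V) [Decidable (v ∈ e.1)] :
    (if v ∈ e.1 then (1 : Z2) else 0) =
      (if v = L.ex e then 1 else 0) + (if v = L.ey e then 1 else 0) := by
  have hne := (L.exy e).ne
  have h : v ∈ e.1 ↔ v = L.ex e ∨ v = L.ey e := by rw [exy_eq, Sym2.mem_iff]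
  by_cases h1 : v = L.ex e
  · have h2 : v ≠ L.ey e := by rw [h1]; exact hne
    rw [if_pos (h.2 (Or.inl h1)), if_pos h1, if_neg h2, add_zero]
  · by_cases h2 : v = L.ey e
    · rw [if_pos (h.2 (Or.inr h2)), if_neg h1, if_pos h2, zero_add]
    · rw [if_neg (by rw [h]; tauto), if_neg h1, if_neg h2, add_zero]

open Classical in
lemma ebd_apply [Fintype V] (z : L.gr.edgeSet → Z2) (v : V) :
    L.ebd z v = ∑ e, z e * (if v ∈ e.1 then 1 else 0) := rfl

open Classical in
lemma ebd_rank [Fintype V] : Module.finrank Z2 (LinearMap.range L.ebd) < Fintype.card V := by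
  have : LinearMap.range L.ebd ≠ ⊤ := by
    intro h
    have hm : (fun v : V => if v = L.o then (1 : Z2) else 0) ∈ LinearMap.range L.ebd := by
      rw [h]; trivial
    obtain ⟨z, hz⟩ := hm
    have h1 : ∑ v, L.ebd z v = 1 := by rw [hz]; simp
    have h2 : ∑ v, L.ebd z v = 0 := by
      simp only [ebd_apply]
      rw [Finset.sum_comm]
      apply Finset.sum_eq_zero
      intro e _
      rw [← Finset.mul_sum]
      have : ∑ i : V, (if i ∈ e.1 then (1 : Z2) else 0) = 0 := by
        simp only [mem_two, Finset.sum_add_distrib]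
        simp
        decide
      rw [this, mul_zero]
    rw [h2] at h1
    exact absurd h1 (by decide)
  have := Submodule.finrank_lt this
  simpa using this

open Classical in
noncomputable def chn [Fintype V] (z : L.gr.edgeSet → Z2) : Chain :=
  ∑ e, z e • L.ec (L.ex e) (L.ey e)

open Classical in
lemma chn_closed [Fintype V] (z : L.gr.edgeSet → Z2) (hz : L.ebd z = 0) : lbd (L.chn z) = 0 := by
  unfold chn
  rw [lbd_sum]
  simp only [lbd_smul, L.ec_lbd (L.exy _)]
  funext p
  simp only [Finset.sum_apply, Pi.smul_apply, Pi.add_apply, smul_eq_mul, Pi.zero_apply]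
  have key : ∀ x, dlt (L.bs x) p = (if L.lb p = x then 1 else 0) * dlt (L.bs (L.lb p)) p := by
    intro x
    by_cases h : L.lb p = x
    · rw [if_pos h, h, one_mul]
    · rw [if_neg h, zero_mul]
      unfold dlt
      rw [if_neg]
      intro h'
      apply h; rw [h', L.lb_bs]
  have h2 := congrFun hz (L.lb p)
  rw [ebd_apply] at h2
  calc _ = ∑ e, (z e * (if L.lb p ∈ e.1 then 1 else 0)) * dlt (L.bs (L.lb p)) p := by
        apply Finset.sum_congr rfl
        intro e _
        rw [key (L.ex e), key (L.ey e), mem_two]; ring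
    _ = 0 := by rw [← Finset.sum_mul, h2]; simp

open Classical in
lemma chn_inter [Fintype V] (z : L.gr.edgeSet → Z2) {p q : LP} (hpq : L.lb p ≠ L.lb q) :
    L.chn z p q = ∑ e, z e * elemC (L.ea e) (L.eb e) p q := by
  unfold chn
  simp only [Finset.sum_apply, Pi.smul_apply, smul_eq_mul]
  apply Finset.sum_congr rfl
  intro e _
  rw [L.ec_inter (L.exy e) hpq]
  rfl

open Classical in
lemma chn_rep [Fintype V] (z : L.gr.edgeSet → Z2) (e : L.gr.edgeSet) :
    L.chn z (L.ea e) (L.eb e) = z e := by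
  rw [chn_inter _ _ (by rw [lb_ea, lb_eb]; exact (L.exy e).ne)]
  rw [Finset.sum_eq_single e]
  · simp [elemC]
  · intro e' _ hne
    have : elemC (L.ea e') (L.eb e') (L.ea e) (L.eb e) = 0 := by
      by_contra h
      exact hne (L.elem_ext h)
    rw [this, mul_zero]
  · simp

lemma chn_sym [Fintype V] (z : L.gr.edgeSet → Z2) : (L.chn z).Sym := by
  classical
  unfold chn
  exact Chain.sym_sum _ _ (fun e _ => (L.ec_sym _ _).smul _)

open Classical in
theorem edge_bound [Fintype V] : Fintype.card L.gr.edgeSet ≤ 3 * Fintype.card V - 3 := by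
  set Z := LinearMap.ker L.ebd with hZ
  have hs : ∀ z : Z, ∃ s, IsBd (L.chn z.1) s := fun z =>
    exact_chain _ (L.chn_sym _) (L.chn_closed _ z.2)
  choose s hs using hs
  let Ψ : LP × Bool → (Z → Z2) := fun f z => s z f
  haveI : Finite Z := inferInstance
  haveI : Fintype Z := Fintype.ofFinite _
  let X : (Z → Z2) → (LP × Bool → Z2) := fun ψ f => if Ψ f = ψ then 1 else 0
  let r : (Z → Z2) → (L.gr.edgeSet → Z2) := fun ψ e =>
    X ψ (lf (L.ea e) (L.ek e)) + X ψ (lf (L.ea e) (L.ek e - 1))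
  let F : Finset (Z → Z2) := Finset.univ.filter (fun ψ => r ψ ≠ 0)
  have expand : ∀ z : Z, ∀ f, s z f = ∑ ψ, ψ z * X ψ f := by
    intro z f
    rw [Finset.sum_eq_single (Ψ f)]
    · simp [X, Ψ]
    · intro ψ _ h
      simp [X, h.symm]
    · simp
  have zr : ∀ z : Z, z.1 = ∑ ψ, ψ z • r ψ := by
    intro z
    funext e
    have h1 := hs z (L.ea e) (L.ek e)
    change L.chn z.1 (L.ea e) (L.eb e) = _ at h1
    rw [chn_rep, expand, expand, ← Finset.sum_add_distrib] at h1
    rw [h1, Finset.sum_apply]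
    apply Finset.sum_congr rfl
    intro ψ _
    simp only [Pi.smul_apply, smul_eq_mul, r]
    ring
  have hle : Z ≤ Submodule.span Z2 ((F.image r : Finset _) : Set (L.gr.edgeSet → Z2)) := by
    intro z hz
    have := zr ⟨z, hz⟩
    change z = _ at this
    rw [this]
    apply Submodule.sum_mem
    intro ψ _
    by_cases h : r ψ = 0
    · rw [h, smul_zero]; exact Submodule.zero_mem _
    · apply Submodule.smul_mem
      apply Submodule.subset_span
      simp only [Finset.coe_image, Set.mem_image]
      exact ⟨ψ, by simp [F, h], rfl⟩
  have hdim : Module.finrank Z2 Z ≤ F.card :=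
    (Submodule.finrank_mono hle).trans ((finrank_span_finset_le_card _).trans Finset.card_image_le)
  have hrn := LinearMap.finrank_range_add_finrank_ker L.ebd
  have hrank := L.ebd_rank
  have hE : Module.finrank Z2 (L.gr.edgeSet → Z2) = Fintype.card L.gr.edgeSet := by simp
  -- double counting
  have two : ∀ e, (F.filter (fun ψ => r ψ e ≠ 0)).card ≤ 2 := by
    intro e
    have : F.filter (fun ψ => r ψ e ≠ 0) ⊆
        {Ψ (lf (L.ea e) (L.ek e)), Ψ (lf (L.ea e) (L.ek e - 1))} := by
      intro ψ hψ
      simp only [Finset.mem_filter] at hψ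
      by_contra hc
      simp only [Finset.mem_insert, Finset.mem_singleton, not_or] at hc
      apply hψ.2
      simp [r, X, Ne.symm hc.1, Ne.symm hc.2]
    exact (Finset.card_le_card this).trans Finset.card_le_two
  have another : ∀ ψ e x, r ψ e ≠ 0 → x ∈ e.1 → ∃ e', e' ≠ e ∧ x ∈ e'.1 ∧ r ψ e' ≠ 0 := by
    intro ψ e x hre hx
    obtain ⟨a0, k0, hd, hl⟩ := exists_dart hx
    by_contra hc
    push Not at hc
    refine one_dart {a | L.lb a = x} (L.fib_fin x) (X ψ) a0 k0 hl ?_ ?_ ?_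
    · intro h
      have h' : L.lb (a0 + ldir k0) = x := h
      exact hd.other (h'.trans hl.symm)
    · rw [hd.face]; exact hre
    · intro a k ha hk hne
      by_contra hX
      have ha' : L.lb a = x := ha
      have hk' : L.lb (a + ldir k) ≠ x := hk
      have hΨ : Ψ (lf a k) ≠ Ψ (lf a (k - 1)) := by
        intro h
        apply hX
        simp only [X, h]
        exact z2_add_self _
      obtain ⟨z, hz⟩ := Function.ne_iff.1 hΨ
      have hch : L.chn z.1 a (a + ldir k) ≠ 0 := by
        rw [hs z a k]
        intro h
        exact hz (z2_eq_of_add h)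
      rw [chn_inter _ _ (by rw [ha']; exact hk'.symm)] at hch
      obtain ⟨e', _, he'⟩ := Finset.exists_ne_zero_of_sum_ne_zero hch
      have hd' : L.Dart e' a k := dart_of_elem (right_ne_zero_of_mul he')
      by_cases hee : e' = e
      · subst hee
        exact hne (hd'.uniq hd (ha'.trans hl.symm))
      · have := hc e' hee (ha' ▸ hd'.lb_mem)
        rw [hd'.face] at hX
        exact hX this
  have three : ∀ ψ ∈ F, 3 ≤ (Finset.univ.filter (fun e => r ψ e ≠ 0)).card := by
    intro ψ hψ
    simp only [F, Finset.mem_filter, Finset.mem_univ, true_and] at hψ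
    obtain ⟨e, he⟩ := Function.ne_iff.1 hψ
    obtain ⟨e1, h1, h2, h3⟩ := another ψ e (L.ex e) he (by rw [exy_eq]; simp)
    obtain ⟨e2, g1, g2, g3⟩ := another ψ e (L.ey e) he (by rw [exy_eq]; simp)
    have h12 : e1 ≠ e2 := by
      rintro rfl
      apply h1
      apply Subtype.ext
      rw [L.exy_eq e]
      exact (Sym2.mem_and_mem_iff (L.exy e).ne).1 ⟨h2, g2⟩
    have : ({e, e1, e2} : Finset _) ⊆ Finset.univ.filter (fun e => r ψ e ≠ 0) := by
      intro e' he'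
      simp only [Finset.mem_insert, Finset.mem_singleton] at he'
      simp only [Finset.mem_filter, Finset.mem_univ, true_and]
      rcases he' with rfl | rfl | rfl
      · exact he
      · exact h3
      · exact g3
    refine le_trans ?_ (Finset.card_le_card this)
    rw [Finset.card_insert_of_notMem, Finset.card_insert_of_notMem, Finset.card_singleton]
    · simpa using h12
    · simp only [Finset.mem_insert, Finset.mem_singleton, not_or]
      exact ⟨h1.symm, g1.symm⟩
  have dc : 3 * F.card ≤ 2 * Fintype.card L.gr.edgeSet := by
    calc 3 * F.card = ∑ ψ ∈ F, 3 := by simp [mul_comm]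
      _ ≤ ∑ ψ ∈ F, (Finset.univ.filter (fun e => r ψ e ≠ 0)).card := Finset.sum_le_sum three
      _ = ∑ e, (F.filter (fun ψ => r ψ e ≠ 0)).card := by
          simp only [Finset.card_filter]
          exact Finset.sum_comm
      _ ≤ ∑ e : L.gr.edgeSet, 2 := Finset.sum_le_sum (fun e _ => two e)
      _ = 2 * Fintype.card L.gr.edgeSet := by simp [mul_comm]
  rw [hE] at hrn
  have : Module.finrank Z2 (LinearMap.ker L.ebd) ≤ F.card := hdim
  omega

end Lab


lemma sn_ge {V : Type} [Fintype V] (G : SimpleGraph V) (v : V) (lv : V → ℕ) (h0 : lv v = 0)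
    (hl : ∀ x y, G.Adj x y → lv y ≤ lv x + 1) (S Bd : Finset V) (hv : v ∉ S)
    (hbd : ∀ y ∈ S, ∀ x, x ∉ S → G.Adj x y → y ∈ Bd) (hBS : Bd ⊆ S)
    (hcnt : ∀ t, (Bd.filter (fun b => lv b ≤ t)).card ≤ 3 * t) :
    S.card ≤ sn G (fun _ => 3) v := by
  classical
  let key : V → ℕ ×ₗ ℕ := fun b => toLex (lv b, (Fintype.equivFin V b : ℕ))
  have key_inj : Function.Injective key := by
    intro b c h
    have : (lv b, (Fintype.equivFin V b : ℕ)) = (lv c, (Fintype.equivFin V c : ℕ)) := h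
    simp only [Prod.mk.injEq] at this
    exact (Fintype.equivFin V).injective (Fin.ext this.2)
  have key_le : ∀ b c, key c ≤ key b → lv c ≤ lv b := by
    intro b c h
    rw [Prod.Lex.le_iff] at h
    rcases h with h | h
    · exact le_of_lt h
    · exact le_of_eq h.1
  let f : V → ℕ := fun b => (Bd.filter (fun c => key c < key b)).card
  have f_lt : ∀ b ∈ Bd, f b < 3 * lv b := by
    intro b hb
    refine lt_of_lt_of_le ?_ (hcnt (lv b))
    apply Finset.card_lt_card
    rw [Finset.ssubset_iff_of_subset]
    · exact ⟨b, by simp [hb], by simp⟩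
    · intro c hc
      simp only [Finset.mem_filter] at hc ⊢
      exact ⟨hc.1, key_le _ _ hc.2.le⟩
  have f_mono : ∀ b ∈ Bd, ∀ c, key b < key c → f b < f c := by
    intro b hb c hbc
    apply Finset.card_lt_card
    rw [Finset.ssubset_iff_of_subset]
    · exact ⟨b, by simp [hb, hbc], by simp⟩
    · intro e he
      simp only [Finset.mem_filter] at he ⊢
      exact ⟨he.1, he.2.trans hbc⟩
  have f_inj : Set.InjOn f Bd := by
    intro b hb c hc h
    rcases lt_trichotomy (key b) (key c) with h1 | h1 | h1
    · have := f_mono b hb c h1; omega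
    · exact key_inj h1
    · have := f_mono c hc b h1; omega
  let P : ℕ → Set V := fun t => {b | b ∈ Bd ∧ f b / 3 = t}
  have burn : ∀ t, ∀ w ∈ burnedSet G v P t, w ∉ S ∧ lv w ≤ t := by
    intro t
    induction t with
    | zero =>
      intro w hw
      have : w = v := hw
      subst this
      exact ⟨hv, h0.le⟩
    | succ t ih =>
      intro w hw
      rcases hw with hw | ⟨⟨u, hu, huw⟩, hP⟩
      · exact ⟨(ih w hw).1, (ih w hw).2.trans (Nat.le_succ t)⟩
      · have h1 := ih u hu
        have h2 := hl u w huw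
        refine ⟨fun hS => ?_, by omega⟩
        have hB := hbd w hS u h1.1 huw
        have h3 := f_lt w hB
        refine hP (f w / 3) ?_ ⟨hB, rfl⟩
        omega
  have valid : ValidStrategy G (fun _ => 3) v P := by
    intro t
    refine ⟨Set.toFinite _, ?_, ?_⟩
    · have : (P t).ncard ≤ ((Finset.Ico (3 * t) (3 * t + 3) : Finset ℕ) : Set ℕ).ncard := by
        refine Set.ncard_le_ncard_of_injOn f ?_ ?_ (Set.toFinite _)
        · rintro b ⟨hb, hb2⟩
          simp only [Finset.coe_Ico, Set.mem_Ico]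
          omega
        · exact f_inj.mono (fun b hb => hb.1)
      rw [Set.ncard_coe_finset, Nat.card_Ico] at this
      simpa using this
    · rw [Set.disjoint_left]
      intro b hb hb2
      exact (burn t b hb2).1 (hBS hb.1)
  have mem : Nat.card {w : V | ∀ t, w ∉ burnedSet G v P t} ∈
      {m | ∃ P, ValidStrategy G (fun _ => 3) v P ∧
        m = Nat.card {w : V | ∀ t, w ∉ burnedSet G v P t}} := ⟨P, valid, rfl⟩
  have bdd : BddAbove {m | ∃ P, ValidStrategy G (fun _ => 3) v P ∧
        m = Nat.card {w : V | ∀ t, w ∉ burnedSet G v P t}} := by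
    refine ⟨Fintype.card V, ?_⟩
    rintro m ⟨P, _, rfl⟩
    rw [← Nat.card_eq_fintype_card]
    exact Nat.card_le_card_of_injective _ Subtype.val_injective
  refine le_trans ?_ (le_csSup bdd mem)
  rw [Nat.card_coe_set_eq, ← Set.ncard_coe_finset]
  apply Set.ncard_le_ncard
  · intro w hw t hb
    exact (burn t w hb).1 hw
  · exact Set.toFinite _

/-- A set meeting every level at most once. -/
def LvInj {V : Type} (lv : V → ℕ) (Q : Finset V) : Prop :=
  ∀ w ∈ Q, ∀ w' ∈ Q, lv w = lv w' → w = w'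

lemma LvInj.card_le {V : Type} {lv : V → ℕ} {Q : Finset V} (h : LvInj lv Q) (i j : ℕ) :
    (Q.filter (fun w => i ≤ lv w ∧ lv w ≤ j)).card ≤ j + 1 - i := by
  rw [← Nat.card_Icc]
  apply Finset.card_le_card_of_injOn lv
  · intro w hw
    simpa using (Finset.mem_filter.1 hw).2
  · intro w hw w' hw' he
    exact h w (Finset.mem_filter.1 hw).1 w' (Finset.mem_filter.1 hw').1 he

open Classical in
lemma savable {V : Type} [Fintype V] (G H : SimpleGraph V) (hGH : G ≤ H) (hc : H.Connected)
    (v : V) (D Q1 Q2 : Finset V) (h1 : LvInj (H.dist v) Q1) (h2 : LvInj (H.dist v) Q2)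
    (hD : ∀ w ∈ D, ∀ w', H.Adj w w' → w' ∈ D ∪ Q1 ∪ Q2 ∨ w' = v)
    (hlev : ((D ∪ Q1 ∪ Q2).filter (fun w => H.Adj v w)).card ≤ 3) :
    ((D ∪ Q1 ∪ Q2).erase v).card ≤ sn G (fun _ => 3) v := by
  have adj1 : ∀ w, H.dist v w = 1 ↔ H.Adj v w := fun w => SimpleGraph.dist_eq_one_iff_adj
  set S := (D ∪ Q1 ∪ Q2).erase v with hS
  refine sn_ge G v (H.dist v) (by simp) ?_ S
    (S.filter (fun w => H.Adj v w ∨ w ∈ Q1 ∪ Q2)) (by simp [hS]) ?_ (Finset.filter_subset _ _) ?_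
  · intro x y hxy
    have := hc.dist_triangle (u := v) (v := x) (w := y)
    have h' : H.dist x y = 1 := SimpleGraph.dist_eq_one_iff_adj.2 (hGH hxy)
    omega
  · intro y hy x hx hxy
    rw [Finset.mem_filter]
    refine ⟨hy, ?_⟩
    by_contra hcon
    push Not at hcon
    have hyD : y ∈ D := by
      have := Finset.mem_of_mem_erase hy
      simp only [Finset.mem_union] at this hcon
      tauto
    have hyx := (hGH hxy).symm
    rcases hD y hyD x hyx with h | h
    · by_cases hxv : x = v
      · subst hxv; exact hcon.1 hyx.symm
      · exact hx (Finset.mem_erase.2 ⟨hxv, h⟩)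
    · subst h; exact hcon.1 hyx.symm
  · intro t
    have sub : (S.filter (fun w => H.Adj v w ∨ w ∈ Q1 ∪ Q2)).filter (fun b => H.dist v b ≤ t) ⊆
        ((D ∪ Q1 ∪ Q2).filter (fun w => H.Adj v w)) ∪
        (Q1.filter (fun w => 2 ≤ H.dist v w ∧ H.dist v w ≤ t)) ∪
        (Q2.filter (fun w => 2 ≤ H.dist v w ∧ H.dist v w ≤ t)) := by
      intro w hw
      simp only [Finset.mem_filter] at hw
      obtain ⟨⟨hwS, hw1⟩, hwt⟩ := hw
      have hne : w ≠ v := Finset.ne_of_mem_erase hwS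
      have hpos : 0 < H.dist v w := hc.pos_dist_of_ne hne.symm
      by_cases hadj : H.Adj v w
      · simp only [Finset.mem_union, Finset.mem_filter]
        left; left
        exact ⟨by simpa only [Finset.mem_union] using Finset.mem_of_mem_erase hwS, hadj⟩
      · have : H.dist v w ≠ 1 := fun h => hadj ((adj1 w).1 h)
        have hq : w ∈ Q1 ∪ Q2 := by tauto
        simp only [Finset.mem_union, Finset.mem_filter] at hq ⊢
        have : 2 ≤ H.dist v w := by omega
        tauto
    rcases Nat.eq_zero_or_pos t with rfl | ht
    · rw [Nat.mul_zero, Nat.le_zero, Finset.card_eq_zero, Finset.eq_empty_iff_forall_notMem]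
      intro w hw
      simp only [Finset.mem_filter] at hw
      have hne : w ≠ v := Finset.ne_of_mem_erase hw.1.1
      have hpos : 0 < H.dist v w := hc.pos_dist_of_ne hne.symm
      omega
    · have := (Finset.card_le_card sub).trans ((Finset.card_union_le _ _).trans
        (Nat.add_le_add_right (Finset.card_union_le _ _) _))
      have a1 := h1.card_le 2 t
      have a2 := h2.card_le 2 t
      omega


lemma exists_par {V : Type} (H : SimpleGraph V) (hc : H.Connected) (v : V) :
    ∃ par : V → V, par v = v ∧ ∀ x, x ≠ v → H.Adj (par x) x ∧ H.dist v (par x) + 1 = H.dist v x := by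
  classical
  have : ∀ x, x ≠ v → ∃ y, H.Adj y x ∧ H.dist v y + 1 = H.dist v x := by
    intro x hx
    obtain ⟨p, hp⟩ := (hc x v).exists_walk_length_eq_dist
    cases p with
    | nil => exact absurd rfl hx
    | @cons _ y _ h q =>
      refine ⟨y, h.symm, ?_⟩
      rw [SimpleGraph.dist_comm (u := v) (v := x), SimpleGraph.dist_comm (u := v) (v := y), ← hp]
      simp only [SimpleGraph.Walk.length_cons]
      have h1 := SimpleGraph.dist_le q
      have h2 := hc.dist_triangle (u := x) (v := y) (w := v)
      have h3 : H.dist x y = 1 := SimpleGraph.dist_eq_one_iff_adj.2 h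
      simp only [SimpleGraph.Walk.length_cons] at hp
      omega
  choose! f hf using this
  refine ⟨fun x => if x = v then v else f x, by simp, ?_⟩
  intro x hx
  simp only [hx, if_false]
  exact hf x hx

/-- Data: a labelling together with a breadth first search tree. -/
structure BT (V : Type) extends Lab V where
  hc : toLab.gr.Connected
  v : V
  par : V → V
  par_v : par v = v
  par_spec : ∀ x, x ≠ v → toLab.gr.Adj (par x) x ∧
    toLab.gr.dist v (par x) + 1 = toLab.gr.dist v x

namespace BT

variable {V : Type} (B : BT V)

noncomputable def lev (x : V) : ℕ := B.gr.dist B.v x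

lemma lev_v : B.lev B.v = 0 := by simp [lev]

lemma lev_pos {x : V} (h : x ≠ B.v) : 0 < B.lev x := B.hc.pos_dist_of_ne h.symm

lemma lev_eq_zero {x : V} : B.lev x = 0 ↔ x = B.v := by
  constructor
  · intro h
    by_contra hx
    have := B.lev_pos hx
    omega
  · rintro rfl; exact B.lev_v

lemma lev_one {x : V} : B.lev x = 1 ↔ B.gr.Adj B.v x := SimpleGraph.dist_eq_one_iff_adj

lemma lev_adj {x y : V} (h : B.gr.Adj x y) : B.lev y ≤ B.lev x + 1 := by
  have := B.hc.dist_triangle (u := B.v) (v := x) (w := y)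
  have h' : B.gr.dist x y = 1 := SimpleGraph.dist_eq_one_iff_adj.2 h
  unfold lev
  omega

lemma lev_par (x : V) : B.lev (B.par x) = B.lev x - 1 := by
  by_cases h : x = B.v
  · subst h; rw [B.par_v, B.lev_v]
  · have := (B.par_spec x h).2
    unfold lev
    omega

lemma lev_iter (x : V) (i : ℕ) : B.lev (B.par^[i] x) = B.lev x - i := by
  induction i with
  | zero => simp
  | succ i ih => rw [Function.iterate_succ_apply', lev_par, ih]; omega

lemma iter_v (i : ℕ) : B.par^[i] B.v = B.v := by
  induction i with
  | zero => rfl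
  | succ i ih => rw [Function.iterate_succ_apply', ih, B.par_v]

def anc (x : V) : Set V := {w | ∃ i, w = B.par^[i] x}

lemma self_anc (x : V) : x ∈ B.anc x := ⟨0, rfl⟩

lemma v_anc (x : V) : B.v ∈ B.anc x := by
  refine ⟨B.lev x, ?_⟩
  symm
  rw [← lev_eq_zero, lev_iter]; omega

lemma anc_iter {x w : V} (h : w ∈ B.anc x) : ∃ i ≤ B.lev x, w = B.par^[i] x := by
  obtain ⟨i, rfl⟩ := h
  by_cases hi : i ≤ B.lev x
  · exact ⟨i, hi, rfl⟩
  · refine ⟨B.lev x, le_rfl, ?_⟩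
    have h1 : B.par^[i] x = B.v := by rw [← lev_eq_zero, lev_iter]; omega
    have h2 : B.par^[B.lev x] x = B.v := by rw [← lev_eq_zero, lev_iter]; omega
    rw [h1, h2]

lemma anc_inj {x w w' : V} (h : w ∈ B.anc x) (h' : w' ∈ B.anc x) (hl : B.lev w = B.lev w') :
    w = w' := by
  obtain ⟨i, hi, rfl⟩ := B.anc_iter h
  obtain ⟨j, hj, rfl⟩ := B.anc_iter h'
  rw [lev_iter, lev_iter] at hl
  have : i = j := by omega
  rw [this]

lemma anc_lev {x w : V} (h : w ∈ B.anc x) : B.lev w ≤ B.lev x := by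
  obtain ⟨i, rfl⟩ := h
  rw [lev_iter]; omega

lemma anc_par {x w : V} (h : w ∈ B.anc x) : B.par w ∈ B.anc x := by
  obtain ⟨i, rfl⟩ := h
  exact ⟨i + 1, by rw [Function.iterate_succ_apply']⟩

lemma anc_trans {x w z : V} (h : w ∈ B.anc x) (h' : z ∈ B.anc w) : z ∈ B.anc x := by
  obtain ⟨i, rfl⟩ := h
  obtain ⟨j, rfl⟩ := h'
  exact ⟨j + i, by rw [Function.iterate_add_apply]⟩

/-- Every element of level at most that of `p` is an ancestor of `p`. -/
lemma anc_low {x p w : V} (hp : p ∈ B.anc x) (hw : w ∈ B.anc x) (h : B.lev w ≤ B.lev p) :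
    w ∈ B.anc p := by
  obtain ⟨i, hi, rfl⟩ := B.anc_iter hp
  obtain ⟨j, hj, rfl⟩ := B.anc_iter hw
  rw [lev_iter, lev_iter] at h
  refine ⟨j - i, ?_⟩
  rw [← Function.iterate_add_apply]
  congr 2; omega

lemma anc_ne_v {x : V} (h : x ≠ B.v) : B.anc x ⊆ insert x (B.anc (B.par x)) := by
  rintro w ⟨i, rfl⟩
  cases i with
  | zero => left; rfl
  | succ i => right; exact ⟨i, by rw [Function.iterate_succ_apply]⟩

noncomputable def T (x : V) : Chain :=
  ∑ i ∈ Finset.range (B.lev x), B.ec (B.par^[i+1] x) (B.par^[i] x)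

lemma T_v : B.T B.v = 0 := by simp [T, lev_v]

lemma T_par {x : V} (h : x ≠ B.v) : B.T x = B.T (B.par x) + B.ec (B.par x) x := by
  have h1 := B.lev_pos h
  have h2 := B.lev_par x
  unfold T
  obtain ⟨m, hm⟩ : ∃ m, B.lev x = m + 1 := ⟨B.lev x - 1, by omega⟩
  rw [h2, hm, Finset.sum_range_succ']
  simp

lemma T_ind {P : V → Prop} (h0 : P B.v) (h1 : ∀ x, x ≠ B.v → P (B.par x) → P x) (x : V) : P x := by
  induction hn : B.lev x generalizing x with
  | zero => rw [lev_eq_zero] at hn; rw [hn]; exact h0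
  | succ n ih =>
    have hx : x ≠ B.v := by rintro rfl; rw [lev_v] at hn; omega
    exact h1 x hx (ih _ (by rw [lev_par]; omega))

lemma T_sym (x : V) : (B.T x).Sym := Chain.sym_sum _ _ (fun _ _ => B.ec_sym _ _)

lemma T_lbd (x : V) : lbd (B.T x) = dlt (B.bs x) + dlt (B.bs B.v) := by
  induction x using B.T_ind with
  | h0 =>
    rw [T_v, lbd_zero]; funext p; simp [z2_add_self]
  | h1 x hx ih =>
    rw [B.T_par hx, lbd_add, ih, B.ec_lbd (B.par_spec x hx).1]
    funext p
    simp only [Pi.add_apply]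
    linear_combination z2_add_self (dlt (B.bs (B.par x)) p)

lemma T_supp {x : V} {p q : LP} (h : B.T x p q ≠ 0) : B.lb p ∈ B.anc x := by
  revert h
  induction x using B.T_ind with
  | h0 => rw [T_v]; simp
  | h1 x hx ih =>
    intro h
    rw [B.T_par hx] at h
    by_cases h2 : B.T (B.par x) p q = 0
    · have h3 : B.ec (B.par x) x p q ≠ 0 := by
        simpa [h2] using h
      rcases B.ec_supp (B.par_spec x hx).1 h3 with h4 | h4
      · rw [h4]; exact B.anc_par (B.self_anc x)
      · rw [h4]; exact B.self_anc x
    · exact B.anc_trans (B.anc_par (B.self_anc x)) (ih h2)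

lemma T_diff (x : V) (m : ℕ) (hm : m ≤ B.lev x) {p q : LP}
    (h : (B.T x + B.T (B.par^[m] x)) p q ≠ 0) : ∃ j ≤ m, B.lb p = B.par^[j] x := by
  induction m with
  | zero => simp [z2_add_self] at h
  | succ m ih =>
    have hne : B.par^[m] x ≠ B.v := by
      intro h; rw [← lev_eq_zero, lev_iter] at h; omega
    have e := B.T_par hne
    rw [← Function.iterate_succ_apply' B.par m x] at e
    by_cases h2 : (B.T x + B.T (B.par^[m] x)) p q = 0
    · rw [e] at h2
      have h3 : B.ec (B.par^[m+1] x) (B.par^[m] x) p q ≠ 0 := by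
        intro h3
        simp only [Pi.add_apply, h3, add_zero] at h2 h
        exact h h2
      have h4 := B.ec_supp (by
        rw [Function.iterate_succ_apply']; exact (B.par_spec _ hne).1) h3
      rcases h4 with h4 | h4
      · exact ⟨m + 1, le_rfl, h4⟩
      · exact ⟨m, by omega, h4⟩
    · obtain ⟨j, hj, h5⟩ := ih (by omega) h2
      exact ⟨j, by omega, h5⟩

noncomputable def tau (a : LP) : Chain := B.rh a + B.T (B.lb a)

lemma tau_lbd (a : LP) : lbd (B.tau a) = dlt a + dlt (B.bs B.v) := by
  unfold tau
  rw [lbd_add, B.rh_lbd, B.T_lbd]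
  funext p
  simp only [Pi.add_apply]
  linear_combination z2_add_self (dlt (B.bs (B.lb a)) p)

lemma tau_supp {a p q : LP} (h : B.tau a p q ≠ 0) : B.lb p ∈ B.anc (B.lb a) := by
  by_cases h2 : B.rh a p q = 0
  · have : B.T (B.lb a) p q ≠ 0 := by
      intro h3; simp [tau, h2, h3] at h
    exact B.T_supp this
  · rw [(B.rh_supp h2).1]; exact B.self_anc _

noncomputable def cc (a b : LP) : Chain := B.tau a + elemC a b + B.tau b

lemma cc_comm (a b : LP) : B.cc a b = B.cc b a := by
  unfold cc
  rw [elemC_comm]; abel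

lemma cc_sym (a b : LP) : (B.cc a b).Sym :=
  (((B.rh_sym _).add (B.T_sym _)).add (elemC_sym _ _)).add ((B.rh_sym _).add (B.T_sym _))

lemma cc_closed {a b : LP} (h : LAdj a b) : lbd (B.cc a b) = 0 := by
  unfold cc
  rw [lbd_add, lbd_add, tau_lbd, tau_lbd, lbd_elemC h]
  funext p
  simp only [Pi.add_apply, Pi.zero_apply]
  linear_combination z2_add_self (dlt a p) + z2_add_self (dlt b p) + z2_add_self (dlt (B.bs B.v) p)

lemma cc_supp {a b p q : LP} (h : B.cc a b p q ≠ 0) :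
    B.lb p ∈ B.anc (B.lb a) ∪ B.anc (B.lb b) := by
  by_cases h1 : B.tau a p q = 0
  · by_cases h2 : B.tau b p q = 0
    · have : elemC a b p q ≠ 0 := by
        intro h3; simp [cc, h1, h2, h3] at h
      rcases Lab.elemC_ne this with ⟨rfl, _⟩ | ⟨rfl, _⟩
      · left; exact B.self_anc _
      · right; exact B.self_anc _
    · right; exact B.tau_supp h2
  · left; exact B.tau_supp h1

/-- For a lattice edge outside of the box, the chain stays outside of the box. -/
lemma cc_out {a b : LP} (ha : a ∉ LBox B.N) (hb : b ∉ LBox B.N) {p : LP} (hp : p ∈ LBox B.N)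
    (q : LP) : B.cc a b p q = 0 := by
  have h1 : B.rh a p q = 0 := by
    by_contra h; exact (B.rh_out ha h).1 hp
  have h2 : B.rh b p q = 0 := by
    by_contra h; exact (B.rh_out hb h).1 hp
  have h3 : elemC a b p q = 0 := by
    by_contra h
    rcases Lab.elemC_ne h with ⟨rfl, _⟩ | ⟨rfl, _⟩
    · exact ha hp
    · exact hb hp
  simp only [cc, tau, Pi.add_apply, h1, h2, h3, B.out a ha, B.out b hb]
  linear_combination z2_add_self (B.T B.o p q)

/-- A separating cycle with a choice of side. -/
def Sep (a b : LP) (s : LP × Bool → Z2) : Prop := LAdj a b ∧ IsBd (B.cc a b) s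

lemma Sep.symm {a b : LP} {s : LP × Bool → Z2} (h : B.Sep a b s) : B.Sep b a s :=
  ⟨h.1.symm, by rw [cc_comm]; exact h.2⟩

end BT

lemma IsBd.add_const {c : Chain} {s : LP × Bool → Z2} (h : IsBd c s) (t : Z2) :
    IsBd c (s + fun _ => t) := by
  intro a k
  simp only [Pi.add_apply]
  rw [h a k]
  linear_combination -z2_add_self t

lemma exists_sep {V : Type} (B : BT V) {a b : LP} (h : LAdj a b) : ∃ s, B.Sep a b s := by
  obtain ⟨s, hs⟩ := exact_chain _ (B.cc_sym a b) (B.cc_closed h)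
  exact ⟨s, h, hs⟩


def indf (f : LP × Bool) : LP × Bool → Z2 := fun g => if g = f then 1 else 0

lemma ldir_val0 : ldir 0 = (1, 0) := rfl
lemma ldir_val1 : ldir 1 = (1, 1) := rfl
lemma ldir_val2 : ldir 2 = (0, 1) := rfl

lemma lf_U {p a : LP} {l : Fin 6} (h : lf p l = (a, true)) :
    p = a ∨ p = a + ldir 0 ∨ p = a + ldir 0 + ldir 2 := by
  obtain ⟨i, j⟩ := a
  obtain ⟨x, y⟩ := p
  fin_cases l <;> simp [lf, loff, lty, ldir] at h ⊢ <;> omega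

lemma lf_D {p a : LP} {l : Fin 6} (h : lf p l = (a, false)) :
    p = a ∨ p = a + ldir 2 ∨ p = a + ldir 2 + ldir 0 := by
  obtain ⟨i, j⟩ := a
  obtain ⟨x, y⟩ := p
  fin_cases l <;> simp [lf, loff, lty, ldir] at h ⊢ <;> omega

lemma tri_U (a : LP) : IsBd (elemC a (a + ldir 0) + elemC (a + ldir 0) (a + ldir 0 + ldir 2) +
    elemC a (a + ldir 1)) (indf (a, true)) := by
  intro p q
  have e : a + ldir 0 + ldir 2 = a + ldir 1 := by rw [add_assoc]; rfl
  by_cases h : p = a ∨ p = a + ldir 0 ∨ p = a + ldir 0 + ldir 2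
  · obtain ⟨i, j⟩ := a
    rcases h with rfl | rfl | rfl
    · fin_cases q <;> simp [elemC, lf, loff, lty, ldir, indf, add_assoc]
    · fin_cases q <;> simp [elemC, lf, loff, lty, ldir, indf, add_assoc]
    · fin_cases q <;> simp [elemC, lf, loff, lty, ldir, indf, add_assoc]
  · have h1 : ∀ l, lf p l ≠ (a, true) := fun l hl => h (lf_U hl)
    rw [e] at h ⊢
    push Not at h
    simp [elemC, indf, h1, h.1, h.2.1, h.2.2]

lemma tri_D (a : LP) : IsBd (elemC a (a + ldir 2) + elemC (a + ldir 2) (a + ldir 2 + ldir 0) +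
    elemC a (a + ldir 1)) (indf (a, false)) := by
  intro p q
  have e : a + ldir 2 + ldir 0 = a + ldir 1 := by rw [add_assoc]; rfl
  by_cases h : p = a ∨ p = a + ldir 2 ∨ p = a + ldir 2 + ldir 0
  · obtain ⟨i, j⟩ := a
    rcases h with rfl | rfl | rfl
    · fin_cases q <;> simp [elemC, lf, loff, lty, ldir, indf, add_assoc]
    · fin_cases q <;> simp [elemC, lf, loff, lty, ldir, indf, add_assoc]
    · fin_cases q <;> simp [elemC, lf, loff, lty, ldir, indf, add_assoc]
  · have h1 : ∀ l, lf p l ≠ (a, false) := fun l hl => h (lf_D hl)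
    rw [e] at h ⊢
    push Not at h
    simp [elemC, indf, h1, h.1, h.2.1, h.2.2]



lemma tri_const {V : Type} (B : BT V) {a b c : LP} {f : LP × Bool}
    (hI : IsBd (elemC a b + elemC b c + elemC a c) (indf f))
    {s1 s2 s3 : LP × Bool → Z2} (h1 : IsBd (B.cc a b) s1) (h2 : IsBd (B.cc b c) s2)
    (h3 : IsBd (B.cc a c) s3) :
    ∃ κ : Z2, ∀ g, s1 g + s2 g + s3 g + indf f g = κ := by
  have h := ((h1.add h2).add h3).add hI
  have h0 : ∀ p q, (B.cc a b + B.cc b c + B.cc a c + (elemC a b + elemC b c + elemC a c)) p q = 0 := by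
    intro p q
    simp only [BT.cc, Pi.add_apply]
    linear_combination z2_add_self (B.tau a p q) + z2_add_self (B.tau b p q) +
      z2_add_self (B.tau c p q) + z2_add_self (elemC a b p q) + z2_add_self (elemC b c p q) +
      z2_add_self (elemC a c p q)
  refine ⟨(s1 + s2 + s3 + indf f) (lf 0 0), ?_⟩
  intro g
  obtain ⟨p, k, rfl⟩ := lf_surj g
  exact free_const h lconn_univ (fun p _ k => h0 _ _) (Set.mem_univ _) (Set.mem_univ _) k 0

lemma sum_parity (t0 t1 t2 : LP → Z2) (f0 : (Function.support t0).Finite)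
    (f1 : (Function.support t1).Finite) (f2 : (Function.support t2).Finite) (g : LP × Bool)
    (hU : ∀ a, t0 a + t2 (a + ldir 0) + t1 a = indf (a, true) g)
    (hD : ∀ a, t2 a + t0 (a + ldir 2) + t1 a = indf (a, false) g) : False := by
  have shift : ∀ (t : LP → Z2) (d : LP), (Function.support t).Finite →
      (Function.support (fun a => t (a + d))).Finite := by
    intro t d ht
    exact (ht.preimage (add_left_injective d).injOn)
  have shs : ∀ (t : LP → Z2) (d : LP), ∑ᶠ a, t (a + d) = ∑ᶠ a, t a := by
    intro t d
    exact finsum_comp_equiv (Equiv.addRight d)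
  have add2 : ∀ (u w : LP → Z2), (Function.support u).Finite → (Function.support w).Finite →
      (Function.support (fun a => u a + w a)).Finite := by
    intro u w hu hw
    exact (hu.union hw).subset (Function.support_add u w)
  have SU : ∑ᶠ a, indf (a, true) g = ∑ᶠ a, t0 a + ∑ᶠ a, t2 a + ∑ᶠ a, t1 a := by
    rw [← shs t2 (ldir 0), ← finsum_add_distrib f0 (shift _ _ f2),
      ← finsum_add_distrib (add2 _ _ f0 (shift _ _ f2)) f1]
    exact finsum_congr (fun a => (hU a).symm)
  have SD : ∑ᶠ a, indf (a, false) g = ∑ᶠ a, t2 a + ∑ᶠ a, t0 a + ∑ᶠ a, t1 a := by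
    rw [← shs t0 (ldir 2), ← finsum_add_distrib f2 (shift _ _ f0),
      ← finsum_add_distrib (add2 _ _ f2 (shift _ _ f0)) f1]
    exact finsum_congr (fun a => (hD a).symm)
  have e : ∑ᶠ a, indf (a, true) g = ∑ᶠ a, indf (a, false) g := by
    rw [SU, SD]; ring
  obtain ⟨c, b⟩ := g
  have one : ∀ b b' : Bool, ∑ᶠ a, indf (a, b) (c, b') = if b = b' then 1 else 0 := by
    intro b b'
    rw [finsum_eq_single _ c]
    · simp [indf, eq_comm]
    · intro a ha
      simp [indf, ha.symm]
  rw [one, one] at e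
  cases b <;> simp at e

namespace BT

variable {V : Type} (B : BT V)

theorem LT (P : LP → LP → (LP × Bool → Z2) → Prop)
    (hP : ∀ a b s, B.Sep a b s → P a b s ∨ P a b (s + fun _ => 1))
    (hO : ∀ a b s, B.Sep a b s → (∀ w, w ∉ B.anc (B.lb a) → B.sval s w = 0) →
      B.lb a = B.lb b → P a b s) :
    ∃ (a b : Fin 3 → LP) (s : Fin 3 → LP × Bool → Z2),
      (∀ i, B.Sep (a i) (b i) (s i) ∧ P (a i) (b i) (s i)) ∧
      ∀ w, ∃ i, w ∈ B.anc (B.lb (a i)) ∪ B.anc (B.lb (b i)) ∨ B.sval (s i) w = 1 := by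
  have ex : ∀ (a : LP) (k : Fin 6), ∃ s, B.Sep a (a + ldir k) s ∧ P a (a + ldir k) s ∧
      (a ∉ LBox B.N → a + ldir k ∉ LBox B.N → ∀ c ∈ LBox B.N, ∀ l, s (lf c l) = 0) := by
    intro a k
    obtain ⟨s, hs⟩ := exists_sep B (⟨k, rfl⟩ : LAdj a (a + ldir k))
    by_cases h : a ∉ LBox B.N ∧ a + ldir k ∉ LBox B.N
    · have h0 : (0 : LP) ∈ LBox B.N := by
        simp [LBox, Set.mem_ofPred_eq]
      have hz : ∀ c ∈ LBox B.N, ∀ l, (s + (fun _ => s (lf 0 0)) : LP × Bool → Z2) (lf c l) = 0 := by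
        intro c hc l
        have := free_const hs.2 (lbox_conn B.N) (fun p hp k => B.cc_out h.1 h.2 hp _) hc h0 l 0
        simp only [Pi.add_apply, this]
        exact z2_add_self _
      have hsep : B.Sep a (a + ldir k) (s + fun _ => s (lf 0 0)) := ⟨hs.1, hs.2.add_const _⟩
      refine ⟨_, hsep, ?_, fun _ _ => hz⟩
      refine hO _ _ _ hsep ?_ ?_
      · intro w hw
        apply hz
        by_contra hb
        apply hw
        rw [B.out a h.1, ← B.out _ hb, B.lb_bs]
        exact B.self_anc _
      · rw [B.out a h.1, B.out _ h.2]
    · rcases hP _ _ s hs with h1 | h1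
      · exact ⟨s, hs, h1, fun h2 h3 => absurd ⟨h2, h3⟩ h⟩
      · exact ⟨_, ⟨hs.1, hs.2.add_const _⟩, h1, fun h2 h3 => absurd ⟨h2, h3⟩ h⟩
  choose S hS1 hS2 hS3 using ex
  have eU : ∀ a : LP, a + ldir 0 + ldir 2 = a + ldir 1 := fun a => by rw [add_assoc]; rfl
  have eD : ∀ a : LP, a + ldir 2 + ldir 0 = a + ldir 1 := fun a => by rw [add_assoc]; rfl
  have main : ∀ (a : LP) (k l : Fin 6) (f : LP × Bool), a + ldir k + ldir l = a + ldir 1 →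
      (∀ p j, lf p j = f → p = a ∨ p = a + ldir k ∨ p = a + ldir k + ldir l) →
      IsBd (elemC a (a + ldir k) + elemC (a + ldir k) (a + ldir k + ldir l) +
        elemC a (a + ldir 1)) (indf f) →
      (∃ g, S a k g + S (a + ldir k) l g + S a 1 g ≠ indf f g) →
      ∃ (a b : Fin 3 → LP) (s : Fin 3 → LP × Bool → Z2),
      (∀ i, B.Sep (a i) (b i) (s i) ∧ P (a i) (b i) (s i)) ∧
      ∀ w, ∃ i, w ∈ B.anc (B.lb (a i)) ∪ B.anc (B.lb (b i)) ∨ B.sval (s i) w = 1 := by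
    intro a k l f he hf hI hg
    have h1 := (hS1 a k).2
    have h2 := (hS1 (a + ldir k) l).2
    have h3 := (hS1 a 1).2
    rw [he] at hI h2 hf
    obtain ⟨κ, hκ⟩ := tri_const B hI h1 h2 h3
    have hκ1 : κ = 1 := by
      rw [← z2_ne_zero]
      rintro rfl
      obtain ⟨g, hg⟩ := hg
      exact hg (z2_eq_of_add (hκ g))
    refine ⟨![a, a + ldir k, a], ![a + ldir k, a + ldir k + ldir l, a + ldir 1],
      ![S a k, S (a + ldir k) l, S a 1], ?_, ?_⟩
    · intro i
      fin_cases i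
      · exact ⟨hS1 a k, hS2 a k⟩
      · exact ⟨hS1 (a + ldir k) l, hS2 (a + ldir k) l⟩
      · exact ⟨hS1 a 1, hS2 a 1⟩
    · intro w
      by_contra hc
      push Not at hc
      have c0 := hc 0
      have c1 := hc 1
      have c2 := hc 2
      simp only [Matrix.cons_val_zero, Matrix.cons_val_one, Matrix.cons_val, Set.mem_union,
        not_or] at c0 c1 c2
      have z : ∀ x : Z2, x ≠ 1 → x = 0 := by decide
      have e0 := z _ c0.2
      have e1 := z _ c1.2
      have e2 := z _ c2.2
      have := hκ (lf (B.bs w) 0)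
      unfold Lab.sval at e0 e1 e2
      rw [e0, e1, e2, hκ1] at this
      have hlf : lf (B.bs w) 0 = f := by
        by_contra hne
        simp [indf, hne] at this
      have hw : ∀ p, B.bs w = p → w ∈ B.anc (B.lb p) := by
        rintro p rfl
        rw [B.lb_bs]; exact B.self_anc w
      rcases hf _ _ hlf with h | h | h
      · exact c0.1.1 (hw _ h)
      · exact c0.1.2 (hw _ h)
      · exact c2.1.2 (hw _ h)
  by_contra hcon
  have h0 : (0 : LP) ∈ LBox B.N := by
    simp [LBox, Set.mem_ofPred_eq]
  have fin : ∀ k : Fin 6, (Function.support (fun a => S a k (lf 0 0))).Finite := by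
    intro k
    refine ((lbox_finite B.N).union ((lbox_finite B.N).preimage
      (add_left_injective (ldir k)).injOn)).subset ?_
    intro a ha
    by_contra hb
    simp only [Set.mem_union, Set.mem_preimage, not_or] at hb
    exact ha (hS3 a k hb.1 hb.2 0 h0 0)
  refine sum_parity (fun a => S a 0 (lf 0 0)) (fun a => S a 1 (lf 0 0)) (fun a => S a 2 (lf 0 0))
    (fin 0) (fin 1) (fin 2) (lf 0 0) ?_ ?_
  · intro a
    by_contra hne
    exact hcon (main a 0 2 (a, true) (eU a) (fun p j h => lf_U h) (tri_U a) ⟨_, hne⟩)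
  · intro a
    by_contra hne
    exact hcon (main a 2 0 (a, false) (eD a) (fun p j h => lf_D h) (tri_D a) ⟨_, hne⟩)

end BT


namespace BT

variable {V : Type} (B : BT V)

noncomputable abbrev sn3 (_B : BT V) (G : SimpleGraph V) (v : V) : ℕ := sn G (fun _ => 3) v

lemma sval_add (s t : LP × Bool → Z2) (w : V) :
    B.sval (s + t) w = B.sval s w + B.sval t w := rfl

lemma sval_const (t : Z2) (w : V) : B.sval (fun _ => t) w = t := rfl

variable [Fintype V]

open Classical in
noncomputable def ancF (x : V) : Finset V := Finset.univ.filter (fun w => w ∈ B.anc x)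

open Classical in
noncomputable def DF (a b : LP) (s : LP × Bool → Z2) : Finset V :=
  Finset.univ.filter (fun w => w ∉ B.anc (B.lb a) ∧ w ∉ B.anc (B.lb b) ∧ B.sval s w = 1)

open Classical in
noncomputable def nb : Finset V := Finset.univ.filter (fun w => B.gr.Adj B.v w)

lemma mem_ancF {x w : V} : w ∈ B.ancF x ↔ w ∈ B.anc x := by simp [ancF]

lemma mem_DF {a b : LP} {s : LP × Bool → Z2} {w : V} : w ∈ B.DF a b s ↔
    (w ∉ B.anc (B.lb a) ∧ w ∉ B.anc (B.lb b) ∧ B.sval s w = 1) := by simp [DF]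

lemma mem_nb {w : V} : w ∈ B.nb ↔ B.gr.Adj B.v w := by simp [nb]

lemma DF_comm (a b : LP) (s : LP × Bool → Z2) : B.DF a b s = B.DF b a s := by
  ext w
  simp only [mem_DF]
  tauto

lemma ancF_inj (x : V) : LvInj (B.gr.dist B.v) (B.ancF x) := by
  intro w hw w' hw' h
  rw [mem_ancF] at hw hw'
  exact B.anc_inj hw hw' h

lemma ancF_nb [DecidableEq V] (x : V) : (B.ancF x ∩ B.nb).card ≤ 1 := by
  rw [Finset.card_le_one]
  intro w hw w' hw'
  simp only [Finset.mem_inter, mem_ancF, mem_nb, ← lev_one] at hw hw'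
  exact B.anc_inj hw.1 hw'.1 (hw.2.trans hw'.2.symm)

variable {B}

lemma Sep.adj {a b : LP} {s : LP × Bool → Z2} (h : B.Sep a b s) {w w' : V} (hw : w ∈ B.DF a b s)
    (hww : B.gr.Adj w w') : w' ∈ B.DF a b s ∨ w' ∈ B.ancF (B.lb a) ∨ w' ∈ B.ancF (B.lb b) := by
  rw [mem_DF] at hw
  rw [mem_DF, mem_ancF, mem_ancF]
  by_contra hc
  push Not at hc
  apply hc.1 hc.2.1 hc.2.2
  rw [← hw.2.2]
  refine (B.side_adj h.2 (Λ := B.anc (B.lb a) ∪ B.anc (B.lb b)) (fun p q hpq => B.cc_supp hpq)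
    hww ?_ ?_).symm
  · rintro (h1 | h1)
    · exact hw.1 h1
    · exact hw.2.1 h1
  · rintro (h1 | h1)
    · exact hc.2.1 h1
    · exact hc.2.2 h1

variable (B)

/-- The saved candidate of a side. -/
noncomputable def cand [DecidableEq V] (a b : LP) (s : LP × Bool → Z2) : Finset V :=
  B.DF a b s ∪ B.ancF (B.lb a) ∪ B.ancF (B.lb b)

variable {B}

lemma cand_save [DecidableEq V] {G : SimpleGraph V} (hG : G ≤ B.gr) {a b : LP}
    {s : LP × Bool → Z2} (h : B.Sep a b s)
    (h3 : (B.cand a b s ∩ B.nb).card ≤ 3) : ((B.cand a b s).erase B.v).card ≤ B.sn3 G B.v := by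
  classical
  have := savable G B.gr hG B.hc B.v (B.DF a b s) (B.ancF (B.lb a)) (B.ancF (B.lb b))
    (B.ancF_inj _) (B.ancF_inj _) ?_ ?_
  · convert this using 3
    unfold cand
    ext; simp
  · intro w hw w' hww
    have := h.adj hw hww
    left
    simp only [Finset.mem_union]
    tauto
  · refine le_trans (Finset.card_le_card ?_) h3
    intro w
    simp only [Finset.mem_filter, Finset.mem_inter, mem_nb, cand, Finset.mem_union]
    tauto

lemma count [DecidableEq V] {a b : LP} {s : LP × Bool → Z2} :
    ((B.ancF (B.lb a) ∪ B.ancF (B.lb b)) ∩ B.nb).card + (B.DF a b s ∩ B.nb).card +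
      (B.DF a b (s + fun _ => 1) ∩ B.nb).card = B.nb.card := by
  rw [← Finset.card_union_of_disjoint, ← Finset.card_union_of_disjoint]
  · congr 1
    ext w
    simp only [Finset.mem_union, Finset.mem_inter, mem_DF, mem_ancF, sval_add, sval_const]
    rcases z2_cases (B.sval s w) with h | h <;> simp [h] <;> tauto
  · rw [Finset.disjoint_left]
    intro w
    simp only [Finset.mem_union, Finset.mem_inter, mem_DF, mem_ancF, sval_add, sval_const]
    rcases z2_cases (B.sval s w) with h | h <;> simp [h] <;> tauto
  · rw [Finset.disjoint_left]
    intro w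
    simp only [Finset.mem_union, Finset.mem_inter, mem_DF, mem_ancF]
    tauto

lemma lam_le [DecidableEq V] (x y : V) :
    ((B.ancF x ∪ B.ancF y) ∩ B.nb).card ≤ 2 := by
  rw [Finset.union_inter_distrib_right]
  refine (Finset.card_union_le _ _).trans ?_
  have h1 := B.ancF_nb x
  have h2 := B.ancF_nb y
  omega

lemma cand_nb [DecidableEq V] (a b : LP) (s : LP × Bool → Z2) :
    (B.cand a b s ∩ B.nb).card ≤ ((B.ancF (B.lb a) ∪ B.ancF (B.lb b)) ∩ B.nb).card +
      (B.DF a b s ∩ B.nb).card := by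
  rw [cand, Finset.union_assoc, Finset.union_comm, Finset.union_inter_distrib_right]
  exact Finset.card_union_le _ _

lemma out_small [DecidableEq V] {a b : LP} {s : LP × Bool → Z2}
    (h : ∀ w, w ∉ B.anc (B.lb a) → B.sval s w = 0) (hl : B.lb a = B.lb b) :
    (B.cand a b s ∩ B.nb).card ≤ 3 := by
  have h0 : B.DF a b s = ∅ := by
    ext w
    simp only [mem_DF, Finset.notMem_empty, iff_false]
    rintro ⟨h1, -, h2⟩
    rw [h w h1] at h2
    exact absurd h2 (by decide)
  have h1 := B.cand_nb a b s
  have h2 := B.lam_le (B.lb a) (B.lb b)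
  rw [h0] at h1
  simp only [Finset.empty_inter, Finset.card_empty] at h1
  omega

/-- The covering consequence of the triangle lemma. -/
lemma cover [DecidableEq V] (P : LP → LP → (LP × Bool → Z2) → Prop)
    (hP : ∀ a b s, B.Sep a b s → P a b s ∨ P a b (s + fun _ => 1))
    (hO : ∀ a b s, (B.cand a b s ∩ B.nb).card ≤ 3 → P a b s) :
    ∃ a b s, B.Sep a b s ∧ P a b s ∧ Fintype.card V ≤ 3 * ((B.cand a b s).erase B.v).card + 1 := by
  obtain ⟨a, b, s, h1, h2⟩ := B.LT P hP (fun a b s _ h hl => hO a b s (out_small h hl))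
  by_contra hc
  push Not at hc
  have k0 := hc _ _ _ (h1 0).1 (h1 0).2
  have k1 := hc _ _ _ (h1 1).1 (h1 1).2
  have k2 := hc _ _ _ (h1 2).1 (h1 2).2
  have sub : (Finset.univ : Finset V).erase B.v ⊆
      (B.cand (a 0) (b 0) (s 0)).erase B.v ∪ (B.cand (a 1) (b 1) (s 1)).erase B.v ∪
      (B.cand (a 2) (b 2) (s 2)).erase B.v := by
    intro w hw
    have hw' := Finset.ne_of_mem_erase hw
    obtain ⟨i, hi⟩ := h2 w
    have : w ∈ (B.cand (a i) (b i) (s i)).erase B.v := by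
      simp only [Finset.mem_erase, cand, Finset.mem_union, mem_DF, mem_ancF]
      simp only [Set.mem_union] at hi
      tauto
    fin_cases i <;> simp only [Finset.mem_union] <;> tauto
  have := (Finset.card_le_card sub).trans ((Finset.card_union_le _ _).trans
        (Nat.add_le_add_right (Finset.card_union_le _ _) _))
  rw [Finset.card_erase_of_mem (Finset.mem_univ _), Finset.card_univ] at this
  omega

lemma deg_le_three {G : SimpleGraph V} (hG : G ≤ B.gr) (h : B.nb.card ≤ 3) :
    Fintype.card V - 1 ≤ B.sn3 G B.v := by
  classical
  have := savable G B.gr hG B.hc B.v Finset.univ ∅ ∅ (by intro w hw; simp at hw)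
    (by intro w hw; simp at hw) (by intros; left; simp) ?_
  · refine le_trans (le_of_eq ?_) this
    rw [Finset.card_erase_of_mem (by simp)]
    simp
  · refine le_trans (Finset.card_le_card ?_) h
    intro w
    simp [mem_nb]

lemma deg_le_five {G : SimpleGraph V} (hG : G ≤ B.gr) (h : B.nb.card ≤ 5) :
    Fintype.card V ≤ 3 * B.sn3 G B.v + 1 := by
  classical
  obtain ⟨a, b, s, h1, h2, h3⟩ := B.cover (fun a b s => (B.cand a b s ∩ B.nb).card ≤ 3) (by
    intro a b s _
    have := B.count (a := a) (b := b) (s := s)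
    have h1 := B.cand_nb a b s
    have h2 := B.cand_nb a b (s + fun _ => 1)
    have h3 := B.lam_le (B.lb a) (B.lb b)
    show (_ : ℕ) ≤ 3 ∨ (_ : ℕ) ≤ 3
    omega) (fun _ _ _ h => h)
  have := cand_save hG h1 h2
  omega

lemma deg_six [DecidableEq V] {G : SimpleGraph V} (hG : G ≤ B.gr) (h : B.nb.card = 6)
    (hsn : 21 * B.sn3 G B.v < 2 * Fintype.card V) :
    ∃ a b s, B.Sep a b s ∧ ((B.ancF (B.lb a) ∪ B.ancF (B.lb b)) ∩ B.nb).card = 2 ∧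
      (B.DF a b s ∩ B.nb).card = 2 ∧ (B.DF a b s).card ≤ (B.DF a b (s + fun _ => 1)).card ∧
      Fintype.card V ≤ 3 * ((B.cand a b s).erase B.v).card + 1 := by
  have hn : 6 ≤ Fintype.card V := by
    rw [← h]; exact Finset.card_le_univ _
  have hss : ∀ s : LP × Bool → Z2, (s + fun _ => 1) + (fun _ => 1) = s := by
    intro s; funext f
    simp only [Pi.add_apply]
    rw [add_assoc, z2_add_self, add_zero]
  obtain ⟨a, b, s, h1, h2, h3⟩ := B.cover (fun a b s => (B.cand a b s ∩ B.nb).card ≤ 3 ∨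
      (((B.ancF (B.lb a) ∪ B.ancF (B.lb b)) ∩ B.nb).card = 2 ∧
      (B.DF a b s ∩ B.nb).card = 2 ∧ (B.DF a b s).card ≤ (B.DF a b (s + fun _ => 1)).card)) (by
    intro a b s _
    have := B.count (a := a) (b := b) (s := s)
    have h1 := B.cand_nb a b s
    have h2 := B.cand_nb a b (s + fun _ => 1)
    have h3 := B.lam_le (B.lb a) (B.lb b)
    simp only [hss]
    omega) (fun _ _ _ h => Or.inl h)
  rcases h2 with h2 | h2
  · have := cand_save hG h1 h2
    omega
  · exact ⟨a, b, s, h1, h2.1, h2.2.1, h2.2.2, h3⟩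

end BT


lemma savable_dec {V : Type} [Fintype V] [i1 : DecidableEq V] (G H : SimpleGraph V)
    (v : V) [i2 : DecidablePred (fun w => H.Adj v w)] (hGH : G ≤ H) (hc : H.Connected)
    (D Q1 Q2 : Finset V) (h1 : LvInj (H.dist v) Q1) (h2 : LvInj (H.dist v) Q2)
    (hD : ∀ w ∈ D, ∀ w', H.Adj w w' → w' ∈ D ∪ Q1 ∪ Q2 ∨ w' = v)
    (hlev : ((D ∪ Q1 ∪ Q2).filter (fun w => H.Adj v w)).card ≤ 3) :
    ((D ∪ Q1 ∪ Q2).erase v).card ≤ sn G (fun _ => 3) v := by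
  convert savable G H hGH hc v D Q1 Q2 h1 h2 (by convert hD) (by convert hlev)

namespace BT

variable {V : Type} (B : BT V)

lemma path_lbd (z : ℕ → V) (n : ℕ) (h : ∀ j < n, B.gr.Adj (z j) (z (j + 1))) :
    lbd (∑ j ∈ Finset.range n, B.ec (z j) (z (j + 1))) = dlt (B.bs (z 0)) + dlt (B.bs (z n)) := by
  induction n with
  | zero =>
    rw [Finset.range_zero, Finset.sum_empty, lbd_zero]
    funext p
    simp [z2_add_self]
  | succ n ih =>
    rw [Finset.sum_range_succ, lbd_add, ih (fun j hj => h j (by omega)), B.ec_lbd (h n (by omega))]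
    funext p
    simp only [Pi.add_apply]
    linear_combination z2_add_self (dlt (B.bs (z n)) p)

lemma path_supp (z : ℕ → V) (n : ℕ) (h : ∀ j < n, B.gr.Adj (z j) (z (j + 1))) {p q : LP}
    (hpq : (∑ j ∈ Finset.range n, B.ec (z j) (z (j + 1))) p q ≠ 0) : ∃ j ≤ n, B.lb p = z j := by
  simp only [Finset.sum_apply] at hpq
  obtain ⟨j, hj, h1⟩ := Finset.exists_ne_zero_of_sum_ne_zero hpq
  have hj' := Finset.mem_range.1 hj
  rcases B.ec_supp (h j hj') h1 with h2 | h2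
  · exact ⟨j, by omega, h2⟩
  · exact ⟨j + 1, by omega, h2⟩

lemma chain_const (f : V → Z2) (Q : V → Prop)
    (hadj : ∀ w w', B.gr.Adj w w' → Q w → Q w' → f w = f w') (x : V) (k : ℕ) (hk : k ≤ B.lev x)
    (hQ : ∀ j < k, Q (B.par^[j] x)) : ∀ j < k, f (B.par^[j] x) = f x := by
  intro j
  induction j with
  | zero => intro _; rfl
  | succ j ih =>
    intro hj
    rw [← ih (by omega)]
    apply hadj _ _ _ (hQ _ hj) (hQ j (by omega))
    rw [Function.iterate_succ_apply']
    apply (B.par_spec _ _).1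
    intro h
    rw [← lev_eq_zero, lev_iter] at h
    omega

variable [Fintype V]

set_option maxHeartbeats 1000000 in
lemma theta [DecidableEq V] {G : SimpleGraph V} (hG : G ≤ B.gr) {a b : LP} {s : LP × Bool → Z2}
    (h : B.Sep a b s) (hinter : ∀ w, w ∈ B.anc (B.lb a) → w ∈ B.anc (B.lb b) → w = B.v)
    (hxv : B.lb a ≠ B.v) (hyv : B.lb b ≠ B.v) (hN : (B.DF a b s ∩ B.nb).card ≤ 2)
    (z : ℕ → V) (i : ℕ) (hi : 2 ≤ i) (z0 : z 0 = B.v)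
    (hadj : ∀ j < i, B.gr.Adj (z j) (z (j + 1))) (hlev : ∀ j ≤ i, B.lev (z j) = j)
    (hD : ∀ j, 1 ≤ j → j < i → z j ∈ B.DF a b s) (hp : z i ∈ B.anc (B.lb a)) :
    ((B.cand a b s).erase B.v).card ≤ 2 * B.sn3 G B.v := by
  classical
  obtain ⟨hab, hbd⟩ := h
  set x := B.lb a with hx
  set y := B.lb b with hy
  have hxy : x ≠ y := by
    intro e
    exact hxv (hinter x (B.self_anc x) (e ▸ B.self_anc x))
  have hxyadj : B.gr.Adj x y := B.gr_adj_of hab hxy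
  obtain ⟨m, hm, hpm⟩ := B.anc_iter hp
  set p := z i with hpdef
  have levp : B.lev p = i := hlev i le_rfl
  have levm : B.lev x = i + m := by
    have := B.lev_iter x m
    rw [← hpm, levp] at this
    omega
  have hpv : p ≠ B.v := by
    intro e; rw [e, B.lev_v] at levp; omega
  have hpy : p ∉ B.anc y := fun h => hpv (hinter _ hp h)
  let PP : Set V := {w | ∃ j ≤ i, w = z j}
  let BB : Set V := {w | ∃ j ≤ m, w = B.par^[j] x}
  have PP_lev : ∀ w ∈ PP, B.lev w ≤ i := by
    rintro w ⟨j, hj, rfl⟩; rw [hlev j hj]; exact hj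
  have BB_lev : ∀ w ∈ BB, i ≤ B.lev w := by
    rintro w ⟨j, hj, rfl⟩; rw [B.lev_iter]; omega
  have BB_anc : ∀ w ∈ BB, w ∈ B.anc x := by
    rintro w ⟨j, hj, rfl⟩; exact ⟨j, rfl⟩
  have ancp_x : ∀ w ∈ B.anc p, w ∈ B.anc x := fun w hw => B.anc_trans hp hw
  have ancx_split : ∀ w ∈ B.anc x, w ∈ B.anc p ∨ w ∈ BB := by
    intro w hw
    obtain ⟨j, hj, rfl⟩ := B.anc_iter hw
    by_cases hjm : j ≤ m
    · right; exact ⟨j, hjm, rfl⟩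
    · left
      apply B.anc_low hp hw
      rw [levp, B.lev_iter]; omega
  have PP_Lam : ∀ w ∈ PP, w ≠ B.v → w ≠ p → w ∈ B.DF a b s := by
    rintro w ⟨j, hj, rfl⟩ h1 h2
    apply hD
    · rcases Nat.eq_zero_or_pos j with rfl | h
      · exact absurd z0 h1
      · exact h
    · rcases Nat.lt_or_ge j i with h | h
      · exact h
      · have : j = i := by omega
        subst this; exact absurd rfl h2
  have DF_ne : ∀ w ∈ B.DF a b s, w ∉ B.anc x ∧ w ∉ B.anc y := fun w hw =>
    ⟨(B.mem_DF.1 hw).1, (B.mem_DF.1 hw).2.1⟩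
  have PP_y : ∀ w ∈ PP, w ∈ B.anc y → w = B.v := by
    intro w hw hwy
    by_contra hne
    by_cases hwp : w = p
    · exact hpy (hwp ▸ hwy)
    · exact (DF_ne w (PP_Lam w hw hne hwp)).2 hwy
  have PP_x : ∀ w ∈ PP, w ∈ B.anc x → w = B.v ∨ w = p := by
    intro w hw hwx
    by_contra hne
    push Not at hne
    exact (DF_ne w (PP_Lam w hw hne.1 hne.2)).1 hwx
  -- the cycle through the shortcut
  let CD : Chain := B.T p + ∑ j ∈ Finset.range i, B.ec (z j) (z (j + 1))
  have CDs : CD.Sym := (B.T_sym p).add (Chain.sym_sum _ _ (fun j _ => B.ec_sym _ _))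
  have CD0 : lbd CD = 0 := by
    simp only [CD]
    rw [lbd_add, B.T_lbd, B.path_lbd z i hadj, z0, ← hpdef]
    funext q
    simp only [Pi.add_apply, Pi.zero_apply]
    linear_combination z2_add_self (dlt (B.bs p) q) + z2_add_self (dlt (B.bs B.v) q)
  obtain ⟨sD, hsD⟩ := exact_chain CD CDs CD0
  have hsD : IsBd CD sD := hsD
  have suppD : ∀ c d, CD c d ≠ 0 → B.lb c ∈ B.anc p ∪ PP := by
    intro c d hcd
    by_cases h1 : B.T p c d = 0
    · right
      apply B.path_supp z i hadj (p := c) (q := d)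
      intro h2
      apply hcd
      simp only [CD, Pi.add_apply, h1, zero_add]
      exact h2
    · left; exact B.T_supp h1
  have hA : IsBd (B.cc a b + CD) (s + sD) := hbd.add hsD
  have suppA : ∀ c d, (B.cc a b + CD) c d ≠ 0 → B.lb c ∈ PP ∪ BB ∪ B.anc y := by
    intro c d hcd
    by_contra hcon
    apply hcd
    have n1 : B.lb c ∉ PP := fun h => hcon (Or.inl (Or.inl h))
    have n2 : B.lb c ∉ BB := fun h => hcon (Or.inl (Or.inr h))
    have n3 : B.lb c ∉ B.anc y := fun h => hcon (Or.inr h)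
    have nx : B.lb c ≠ x := fun h => n2 (h ▸ ⟨0, by omega, rfl⟩)
    have ny : B.lb c ≠ y := fun h => n3 (h ▸ B.self_anc y)
    have e1 : B.rh a c d = 0 := by
      by_contra hh; exact nx (B.rh_supp hh).1
    have e2 : B.rh b c d = 0 := by
      by_contra hh; exact ny (B.rh_supp hh).1
    have e3 : elemC a b c d = 0 := by
      by_contra hh
      rcases Lab.elemC_ne hh with ⟨rfl, _⟩ | ⟨rfl, _⟩
      · exact nx rfl
      · exact ny rfl
    have e4 : B.T y c d = 0 := by
      by_contra hh; exact n3 (B.T_supp hh)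
    have e5 : (B.T x + B.T p) c d = 0 := by
      by_contra hh
      rw [hpm] at hh
      exact n2 (B.T_diff x m hm hh)
    have e6 : (∑ j ∈ Finset.range i, B.ec (z j) (z (j + 1))) c d = 0 := by
      by_contra hh
      exact n1 (B.path_supp z i hadj hh)
    have : (B.cc a b + CD) c d = B.rh a c d + elemC a b c d + B.rh b c d + B.T y c d +
        (B.T x + B.T p) c d + (∑ j ∈ Finset.range i, B.ec (z j) (z (j + 1))) c d := by
      simp only [cc, tau, CD, Pi.add_apply, ← hx, ← hy]
      ring
    rw [this, e1, e2, e3, e4, e5, e6]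
    simp
  have suppE : ∀ c d, B.cc a b c d ≠ 0 → B.lb c ∈ B.anc x ∪ B.anc y := fun c d => B.cc_supp
  -- the rest set
  set γ := B.sval sD y with hγ
  have adjD : ∀ w w', B.gr.Adj w w' → w ∉ B.anc p ∪ PP → w' ∉ B.anc p ∪ PP →
      B.sval sD w = B.sval sD w' := fun w w' hw h1 h2 => B.side_adj hsD suppD hw h1 h2
  have adjA : ∀ w w', B.gr.Adj w w' → w ∉ PP ∪ BB ∪ B.anc y → w' ∉ PP ∪ BB ∪ B.anc y →
      B.sval (s + sD) w = B.sval (s + sD) w' := fun w w' hw h1 h2 => B.side_adj hA suppA hw h1 h2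
  have Ry_not : ∀ w, w ∈ B.anc y → w ≠ B.v → w ∉ B.anc p ∪ PP := by
    rintro w hw hwv (h1 | h1)
    · exact hwv (hinter w (ancp_x w h1) hw)
    · exact hwv (PP_y w h1 hw)
  have Rx_not : ∀ j < m, B.par^[j] x ∉ B.anc p ∪ PP := by
    rintro j hj (h1 | h1)
    · have := B.anc_lev h1
      rw [levp, B.lev_iter] at this; omega
    · have := PP_lev _ h1
      rw [B.lev_iter] at this; omega
  have Ry : ∀ w, w ∈ B.anc y → w ≠ B.v → B.sval sD w = γ := by
    intro w hw hwv
    obtain ⟨j, hj, rfl⟩ := B.anc_iter hw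
    have hnv : ∀ j < B.lev y, B.par^[j] y ≠ B.v := by
      intro j hj h
      rw [← lev_eq_zero, lev_iter] at h; omega
    refine B.chain_const (B.sval sD) (fun w => w ∉ B.anc p ∪ PP) adjD y (B.lev y) le_rfl
      (fun j hj => Ry_not _ ⟨j, rfl⟩ (hnv j hj)) j ?_
    rcases Nat.lt_or_ge j (B.lev y) with h | h
    · exact h
    · exfalso; apply hwv
      rw [← lev_eq_zero, lev_iter]; omega
  have Rx : ∀ j < m, B.sval sD (B.par^[j] x) = γ := by
    intro j hj
    rw [B.chain_const (B.sval sD) (fun w => w ∉ B.anc p ∪ PP) adjD x m hm Rx_not j hj]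
    exact adjD _ _ hxyadj (Rx_not 0 (by omega)) (Ry_not y (B.self_anc y) hyv)
  have RB : ∀ w ∈ BB, w ≠ p → w ∉ B.anc p ∪ PP ∧ B.sval sD w = γ := by
    rintro w ⟨j, hj, rfl⟩ hne
    have : j < m := by
      rcases Nat.lt_or_ge j m with h | h
      · exact h
      · have : j = m := by omega
        subst this; exact absurd hpm.symm hne
    exact ⟨Rx_not j this, Rx j this⟩
  -- interior of the tree path to p
  set η := B.sval (s + sD) (B.par p) with hη
  have I_not : ∀ w, w ∈ B.anc p → w ≠ B.v → w ≠ p → w ∉ PP ∪ BB ∪ B.anc y := by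
    rintro w hw hwv hwp ((h1 | h1) | h1)
    · rcases PP_x w h1 (ancp_x w hw) with h2 | h2
      · exact hwv h2
      · exact hwp h2
    · have h2 := BB_lev w h1
      have h3 := B.anc_lev hw
      exact hwp (B.anc_inj hw (B.self_anc p) (by omega))
    · exact hwv (hinter w (ancp_x w hw) h1)
  have I_val : ∀ w, w ∈ B.anc p → w ≠ B.v → w ≠ p → B.sval (s + sD) w = η := by
    intro w hw hwv hwp
    obtain ⟨j, hj, rfl⟩ := B.anc_iter hw
    cases j with
    | zero => exact absurd rfl hwp
    | succ j =>
      rw [Function.iterate_succ_apply]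
      have hlp : B.lev (B.par p) = i - 1 := by rw [B.lev_par, levp]
      refine B.chain_const (B.sval (s + sD)) (fun w => w ∉ PP ∪ BB ∪ B.anc y) adjA (B.par p)
        (B.lev (B.par p)) le_rfl (fun j hj => ?_) j ?_
      · apply I_not
        · exact B.anc_trans (B.anc_par (B.self_anc p)) ⟨j, rfl⟩
        · intro h; rw [← lev_eq_zero, lev_iter] at h; omega
        · intro h
          have := congrArg B.lev h
          rw [lev_iter] at this; omega
      · rw [hlp]
        have : B.lev (B.par^[j+1] p) ≠ 0 := by
          rw [Ne, lev_eq_zero]; exact hwv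
        rw [lev_iter] at this; omega
  have u_DF : z 1 ∈ B.DF a b s := hD 1 le_rfl (by omega)
  have hvu : B.gr.Adj B.v (z 1) := by
    have := hadj 0 (by omega)
    rwa [z0] at this
  have claim : η ≠ 1 + γ := by
    intro hc
    have sq : ∀ t : Z2, t * (t + 1) = 0 := by decide
    refine one_dart {c | B.lb c = B.v} (B.fib_fin B.v) (fun f => s f * (sD f + γ))
      (B.ra B.v (z 1)) (B.rk B.v (z 1)) (B.lb_ra hvu) ?_ ?_ ?_
    · intro hh
      have h1 : B.lb (B.rb B.v (z 1)) = B.v := hh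
      rw [B.lb_rb hvu] at h1
      exact hvu.ne h1.symm
    all_goals
      have uval : ∀ c k, B.lb c = B.v → B.lb (c + ldir k) = z 1 →
          s (lf c k) * (sD (lf c k) + γ) + s (lf c (k - 1)) * (sD (lf c (k - 1)) + γ) =
            elemC (B.ra B.v (z 1)) (B.rb B.v (z 1)) c (c + ldir k) := by
        intro c k hcv hcu
        have hnu : B.lb (c + ldir k) ∉ B.anc x ∪ B.anc y := by
          rw [hcu]
          rintro (h1 | h1)
          · exact (DF_ne _ u_DF).1 h1
          · exact (DF_ne _ u_DF).2 h1
        have s1 := B.side hbd suppE (c + ldir k) hnu (k + 2)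
        have s2 := B.side hbd suppE (c + ldir k) hnu (k + 3)
        have uv := (B.mem_DF.1 u_DF).2.2
        rw [lf_next, hcu, uv] at s1
        rw [lf_rev, hcu, uv] at s2
        have e := hsD c k
        have t1 : B.T p c (c + ldir k) = 0 := by
          by_contra hh
          have : B.T p (c + ldir k) c ≠ 0 := by rw [B.T_sym]; exact hh
          have := B.T_supp this
          rw [hcu] at this
          exact (DF_ne _ u_DF).1 (ancp_x _ this)
        have t2 : (∑ j ∈ Finset.range i, B.ec (z j) (z (j + 1))) c (c + ldir k) =
            B.ec B.v (z 1) c (c + ldir k) := by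
          simp only [Finset.sum_apply]
          rw [Finset.sum_eq_single 0]
          · simp [z0]
          · intro j hj hj0
            have hj' := Finset.mem_range.1 hj
            by_contra hh
            have hl := B.lev_v
            rcases B.ec_supp (hadj j hj') hh with h2 | h2
            · rw [hcv] at h2
              rw [h2, hlev j (by omega)] at hl
              omega
            · rw [hcv] at h2
              rw [h2, hlev (j+1) (by omega)] at hl
              omega
          · intro h0; exact absurd (Finset.mem_range.2 (by omega)) h0
        have hne : B.lb c ≠ B.lb (c + ldir k) := by
          rw [hcv, hcu]; exact hvu.ne
        rw [← B.ec_inter hvu hne, ← t2]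
        have : CD c (c + ldir k) =
            (∑ j ∈ Finset.range i, B.ec (z j) (z (j + 1))) c (c + ldir k) := by
          simp only [CD, Pi.add_apply, t1, zero_add]
        rw [← this, e, s1, s2]
        linear_combination z2_add_self γ
    · have := uval _ _ (B.lb_ra hvu) (B.lb_rb hvu)
      change s (lf (B.ra B.v (z 1)) (B.rk B.v (z 1))) * _ + _ ≠ 0
      rw [this]
      simp [elemC, Lab.rb]
    · intro c k hcv hcn hne
      have hcv : B.lb c = B.v := hcv
      have hcn : B.lb (c + ldir k) ≠ B.v := hcn
      change s (lf c k) * (sD (lf c k) + γ) + s (lf c (k - 1)) * (sD (lf c (k - 1)) + γ) = 0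
      set w := B.lb (c + ldir k) with hw
      have hadjw : B.gr.Adj B.v w := by
        rw [← hcv]
        exact B.gr_adj_of ⟨k, rfl⟩ (by rw [hcv]; exact hcn.symm)
      have levw : B.lev w = 1 := B.lev_one.2 hadjw
      by_cases hwu : w = z 1
      · rw [uval c k hcv hwu]
        by_contra hh
        rcases Lab.elemC_ne hh with ⟨h1, h2⟩ | ⟨h1, h2⟩
        · apply hne
          rw [Prod.mk.injEq]
          refine ⟨h1, ldir_inj ?_⟩
          rw [h1] at h2
          simpa [Lab.rb] using h2
        · have : B.lb c = z 1 := by rw [h1]; exact B.lb_rb hvu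
          rw [hcv] at this
          exact hvu.ne this
      have hwP : w ∉ PP := by
        rintro ⟨j, hj, hj2⟩
        have := hlev j hj
        rw [← hj2, levw] at this
        rw [← this] at hj2
        exact hwu hj2
      have hwp : w ≠ p := by
        intro e; rw [e, levp] at levw; omega
      have gam : w ∉ B.anc p ∪ PP → B.sval sD w = γ →
          s (lf c k) * (sD (lf c k) + γ) + s (lf c (k - 1)) * (sD (lf c (k - 1)) + γ) = 0 := by
        intro hn hv
        have s1 := B.side hsD suppD (c + ldir k) hn (k + 2)
        have s2 := B.side hsD suppD (c + ldir k) hn (k + 3)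
        rw [lf_next] at s1
        rw [lf_rev] at s2
        rw [s1, s2, ← hw, hv, z2_add_self]; simp
      by_cases hwy : w ∈ B.anc y
      · exact gam (Ry_not w hwy hcn) (Ry w hwy hcn)
      by_cases hwx : w ∈ B.anc x
      · rcases ancx_split w hwx with h1 | h1
        · have hn := I_not w h1 hcn hwp
          have s1 := B.side hA suppA (c + ldir k) hn (k + 2)
          have s2 := B.side hA suppA (c + ldir k) hn (k + 3)
          rw [lf_next, ← hw, I_val w h1 hcn hwp, hc] at s1
          rw [lf_rev, ← hw, I_val w h1 hcn hwp, hc] at s2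
          simp only [Pi.add_apply] at s1 s2
          have r1 : sD (lf c k) + γ = s (lf c k) + 1 := by
            linear_combination s1 + z2_add_self γ - z2_add_self (s (lf c k))
          have r2 : sD (lf c (k - 1)) + γ = s (lf c (k - 1)) + 1 := by
            linear_combination s2 + z2_add_self γ - z2_add_self (s (lf c (k - 1)))
          rw [r1, r2, sq, sq, add_zero]
        · have := RB w h1 hwp
          exact gam this.1 this.2
      · have hn1 : w ∉ B.anc x ∪ B.anc y := by
          rintro (h1 | h1)
          · exact hwx h1
          · exact hwy h1
        have hn2 : w ∉ B.anc p ∪ PP := by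
          rintro (h1 | h1)
          · exact hwx (ancp_x w h1)
          · exact hwP h1
        have s1 := B.side hbd suppE (c + ldir k) hn1 (k + 2)
        have s2 := B.side hbd suppE (c + ldir k) hn1 (k + 3)
        have s3 := B.side hsD suppD (c + ldir k) hn2 (k + 2)
        have s4 := B.side hsD suppD (c + ldir k) hn2 (k + 3)
        rw [lf_next] at s1 s3
        rw [lf_rev] at s2 s4
        rw [s1, s2, s3, s4]
        exact z2_add_self _
  -- the two savable pieces
  let PF : Finset V := Finset.univ.filter (fun w => w ∈ PP)
  let BF : Finset V := Finset.univ.filter (fun w => w ∈ BB)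
  let X1 : Finset V := (B.DF a b s).filter (fun w => w ∉ PP ∧ B.sval sD w ≠ γ)
  let X2 : Finset V := (B.DF a b s).filter (fun w => w ∉ PP ∧ B.sval sD w = γ)
  have hPF : LvInj (B.gr.dist B.v) PF := by
    intro w hw w' hw' e
    obtain ⟨j, hj, rfl⟩ := (Finset.mem_filter.1 hw).2
    obtain ⟨j', hj', rfl⟩ := (Finset.mem_filter.1 hw').2
    have e : B.lev (z j) = B.lev (z j') := e
    rw [hlev j hj, hlev j' hj'] at e
    rw [e]
  have pPP : p ∈ PP := ⟨i, le_rfl, rfl⟩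
  have hPBF : LvInj (B.gr.dist B.v) (PF ∪ BF) := by
    have cross : ∀ w ∈ PP, ∀ w' ∈ BB, B.lev w = B.lev w' → w = w' := by
      intro w hw w' hw' e
      have h1 := PP_lev w hw
      have h2 := BB_lev w' hw'
      have e1 : w = p := hPF w (by simp [PF, hw]) p (by simp [PF, pPP])
        (show B.lev w = B.lev p by omega)
      have e2 : w' = p := B.anc_inj (BB_anc w' hw') hp (by omega)
      rw [e1, e2]
    intro w hw w' hw' e
    simp only [Finset.mem_union, PF, BF, Finset.mem_filter, Finset.mem_univ, true_and] at hw hw'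
    rcases hw with hw | hw <;> rcases hw' with hw' | hw'
    · exact hPF w (by simp [PF, hw]) w' (by simp [PF, hw']) e
    · exact cross w hw w' hw' e
    · exact (cross w' hw' w hw e.symm).symm
    · exact B.anc_inj (BB_anc w hw) (BB_anc w' hw') e
  have DF_not : ∀ w ∈ B.DF a b s, w ∉ PP → w ∉ B.anc p ∪ PP := by
    rintro w hw hwP (h1 | h1)
    · exact (DF_ne w hw).1 (ancp_x w h1)
    · exact hwP h1
  have hSep : B.Sep a b s := ⟨hab, hbd⟩
  have PP_nb : ∀ w ∈ PP, B.gr.Adj B.v w → w ∈ B.DF a b s := by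
    intro w hw hwv
    apply PP_Lam w hw hwv.ne'
    rintro rfl
    rw [← B.lev_one] at hwv
    omega
  have W1 : ((X1 ∪ B.ancF p ∪ PF).erase B.v).card ≤ B.sn3 G B.v := by
    refine savable_dec G B.gr B.v hG B.hc X1 (B.ancF p) PF (B.ancF_inj _) hPF ?_ ?_
    · intro w hw w' hww
      have hw' := Finset.mem_filter.1 hw
      by_cases hv : w' = B.v
      · exact Or.inr hv
      left
      simp only [Finset.mem_union, PF, X1, Finset.mem_filter, Finset.mem_univ, true_and, mem_ancF]
      by_contra hcon
      push Not at hcon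
      have hn' : w' ∉ B.anc p ∪ PP := by
        rintro (h1 | h1)
        · exact hcon.1.2 h1
        · exact hcon.2 h1
      have hsame := adjD w w' hww (DF_not w hw'.1 hw'.2.1) hn'
      rcases hSep.adj hw'.1 hww with h1 | h1 | h1
      · exact hw'.2.2 (hsame.trans (hcon.1.1 h1 hcon.2))
      · rw [mem_ancF] at h1
        rcases ancx_split w' h1 with h2 | h2
        · exact hcon.1.2 h2
        · have := RB w' h2 (fun e => hcon.2 (e ▸ pPP))
          exact hw'.2.2 (hsame.trans this.2)
      · rw [mem_ancF] at h1
        exact hw'.2.2 (hsame.trans (Ry w' h1 hv))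
    · have sub : (X1 ∪ B.ancF p ∪ PF).filter (fun w => B.gr.Adj B.v w) ⊆
          (B.DF a b s ∩ B.nb) ∪ (B.ancF p ∩ B.nb) := by
        intro w hw
        simp only [Finset.mem_union, PF, X1, Finset.mem_filter, Finset.mem_univ, true_and,
          Finset.mem_inter, mem_nb] at hw ⊢
        have := PP_nb w
        tauto
      have h1 := (Finset.card_le_card sub).trans (Finset.card_union_le _ _)
      have h2 := B.ancF_nb p
      omega
  have W2 : ((X2 ∪ (PF ∪ BF) ∪ B.ancF y).erase B.v).card ≤ B.sn3 G B.v := by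
    refine savable_dec G B.gr B.v hG B.hc X2 (PF ∪ BF) (B.ancF y) hPBF (B.ancF_inj _) ?_ ?_
    · intro w hw w' hww
      have hw' := Finset.mem_filter.1 hw
      by_cases hv : w' = B.v
      · exact Or.inr hv
      left
      simp only [Finset.mem_union, PF, BF, X2, Finset.mem_filter, Finset.mem_univ, true_and,
        mem_ancF]
      by_contra hcon
      push Not at hcon
      rcases hSep.adj hw'.1 hww with h1 | h1 | h1
      · have hsame := adjD w w' hww (DF_not w hw'.1 hw'.2.1) (DF_not w' h1 hcon.1.2.1)
        exact hcon.1.1 h1 hcon.1.2.1 (hsame ▸ hw'.2.2)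
      · rw [mem_ancF] at h1
        rcases ancx_split w' h1 with h2 | h2
        · have hne : w' ≠ p := fun e => hcon.1.2.1 (e ▸ pPP)
          have hnw : w ∉ PP ∪ BB ∪ B.anc y := by
            rintro ((h3 | h3) | h3)
            · exact hw'.2.1 h3
            · exact (DF_ne w hw'.1).1 (BB_anc w h3)
            · exact (DF_ne w hw'.1).2 h3
          have hsame := adjA w w' hww hnw (I_not w' h2 hv hne)
          rw [I_val w' h2 hv hne, sval_add, (B.mem_DF.1 hw'.1).2.2, hw'.2.2] at hsame
          exact claim hsame.symm
        · exact hcon.1.2.2 h2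
      · rw [mem_ancF] at h1
        exact hcon.2 h1
    · have sub : (X2 ∪ (PF ∪ BF) ∪ B.ancF y).filter (fun w => B.gr.Adj B.v w) ⊆
          (B.DF a b s ∩ B.nb) ∪ (B.ancF y ∩ B.nb) := by
        intro w hw
        simp only [Finset.mem_union, PF, BF, X2, Finset.mem_filter, Finset.mem_univ, true_and,
          Finset.mem_inter, mem_nb] at hw ⊢
        have h1 := PP_nb w
        have h2 : w ∈ BB → ¬ B.gr.Adj B.v w := by
          intro hB hh
          have := BB_lev w hB
          rw [← B.lev_one] at hh
          omega
        tauto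
      have h1 := (Finset.card_le_card sub).trans (Finset.card_union_le _ _)
      have h2 := B.ancF_nb y
      omega
  have sub : (B.cand a b s).erase B.v ⊆
      (X1 ∪ B.ancF p ∪ PF).erase B.v ∪ (X2 ∪ (PF ∪ BF) ∪ B.ancF y).erase B.v := by
    intro w hw
    simp only [cand, Finset.mem_union, PF, BF, X1, X2, Finset.mem_filter, Finset.mem_univ,
      true_and, Finset.mem_erase, mem_ancF, ← hx, ← hy] at hw ⊢
    have := ancx_split w
    tauto
  have := (Finset.card_le_card sub).trans (Finset.card_union_le _ _)
  omega

end BT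


namespace BT

variable {V : Type} {B : BT V} [Fintype V]

lemma far [DecidableEq V] {G : SimpleGraph V} (hG : G ≤ B.gr) {a b : LP} {s : LP × Bool → Z2}
    (h : B.Sep a b s) (hinter : ∀ w, w ∈ B.anc (B.lb a) → w ∈ B.anc (B.lb b) → w = B.v)
    (hxv : B.lb a ≠ B.v) (hyv : B.lb b ≠ B.v) (hN : (B.DF a b s ∩ B.nb).card ≤ 2)
    (hn : 7 ≤ Fintype.card V) (hsn : 21 * B.sn3 G B.v < 2 * Fintype.card V)
    (hcand : Fintype.card V ≤ 3 * ((B.cand a b s).erase B.v).card + 1)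
    {u c : V} (hu : u ∈ B.DF a b s) (hun : B.gr.Adj B.v u)
    (hc : c ∈ B.ancF (B.lb a) ∪ B.ancF (B.lb b)) : B.lev c ≤ B.gr.dist u c := by
  classical
  by_contra hcon
  push Not at hcon
  obtain ⟨p, hp⟩ := (B.hc u c).exists_walk_length_eq_dist
  set m := p.length with hm
  have hl1 : B.lev u = 1 := B.lev_one.2 hun
  have hlc : B.lev c = m + 1 := by
    have := B.hc.dist_triangle (u := B.v) (v := u) (w := c)
    have h2 : B.lev c = B.gr.dist B.v c := rfl
    have h3 : B.lev u = B.gr.dist B.v u := rfl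
    omega
  let z : ℕ → V := fun j => Nat.rec B.v (fun j _ => p.getVert j) j
  have z0 : z 0 = B.v := rfl
  have z1 : z 1 = u := p.getVert_zero
  have zs : ∀ j, z (j + 1) = p.getVert j := fun j => rfl
  have zm : z (m + 1) = c := p.getVert_length
  have hadj : ∀ j < m + 1, B.gr.Adj (z j) (z (j + 1)) := by
    intro j hj
    rcases j with _ | j
    · change B.gr.Adj (z 0) (z 1)
      rw [z0, z1]; exact hun
    · rw [zs, zs]
      exact p.adj_getVert_succ (by omega)
  have step : ∀ k j, j + k ≤ m + 1 → B.lev (z (j + k)) ≤ B.lev (z j) + k := by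
    intro k j
    induction k with
    | zero => intro _; exact le_rfl
    | succ k ih =>
      intro hk
      have h1 := ih (by omega)
      have h2 := B.lev_adj (hadj (j + k) (by omega))
      rw [← add_assoc]
      omega
  have hlev : ∀ j ≤ m + 1, B.lev (z j) = j := by
    intro j hj
    have h1 := step j 0 (by omega)
    have h2 := step (m + 1 - j) j (by omega)
    have e : j + (m + 1 - j) = m + 1 := by omega
    rw [e, zm, hlc] at h2
    rw [z0, B.lev_v, zero_add] at h1
    omega
  have ex : ∃ j, 1 ≤ j ∧ z j ∈ B.ancF (B.lb a) ∪ B.ancF (B.lb b) := ⟨m + 1, by omega, by rw [zm]; exact hc⟩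
  obtain ⟨i, hi1, him, hmin⟩ : ∃ i, (1 ≤ i ∧ z i ∈ B.ancF (B.lb a) ∪ B.ancF (B.lb b)) ∧ i ≤ m + 1 ∧
      ∀ j < i, 1 ≤ j → z j ∉ B.ancF (B.lb a) ∪ B.ancF (B.lb b) := by
    let P : ℕ → Prop := fun j => 1 ≤ j ∧ z j ∈ B.ancF (B.lb a) ∪ B.ancF (B.lb b)
    have ex' : ∃ j, P j := ex
    refine ⟨Nat.find ex', Nat.find_spec ex', Nat.find_min' ex' ⟨by omega, by rw [zm]; exact hc⟩, ?_⟩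
    intro j hj h1 h2
    exact Nat.find_min ex' hj ⟨h1, h2⟩
  have huL : u ∉ B.ancF (B.lb a) ∪ B.ancF (B.lb b) := by
    rw [mem_DF] at hu
    simp only [Finset.mem_union, mem_ancF]
    tauto
  have hi2 : 2 ≤ i := by
    by_contra hlt
    have : i = 1 := by have := hi1.1; omega
    rw [this, z1] at hi1
    exact huL hi1.2
  have hD : ∀ j, 1 ≤ j → j < i → z j ∈ B.DF a b s := by
    intro j h1
    induction j, h1 using Nat.le_induction with
    | base => intro _; rw [z1]; exact hu
    | succ j h1 ih =>
      intro hj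
      have h2 := hmin (j + 1) hj (by omega)
      rw [Finset.mem_union] at h2
      rcases h.adj (ih (by omega)) (hadj j (by omega)) with h3 | h3 | h3
      · exact h3
      · exact absurd (Or.inl h3) h2
      · exact absurd (Or.inr h3) h2
  have hadj' : ∀ j < i, B.gr.Adj (z j) (z (j + 1)) := fun j hj => hadj j (by omega)
  have hlev' : ∀ j ≤ i, B.lev (z j) = j := fun j hj => hlev j (by omega)
  have fin : ((B.cand a b s).erase B.v).card ≤ 2 * B.sn3 G B.v := by
    rcases Finset.mem_union.1 hi1.2 with h1 | h1
    · exact B.theta hG h hinter hxv hyv hN z i hi2 z0 hadj' hlev' hD ((B.mem_ancF).1 h1)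
    · have e : B.cand b a s = B.cand a b s := by
        unfold cand
        rw [B.DF_comm b a, Finset.union_assoc, Finset.union_assoc,
          Finset.union_comm (B.ancF (B.lb b))]
      rw [← e]
      exact B.theta hG h.symm (fun w h2 h3 => hinter w h3 h2) hyv hxv (by rw [B.DF_comm b a]; exact hN)
        z i hi2 z0 hadj' hlev' (by rw [B.DF_comm b a]; exact hD) ((B.mem_ancF).1 h1)
  omega

lemma hinter_of [DecidableEq V] {x y : V} (h : ((B.ancF x ∪ B.ancF y) ∩ B.nb).card = 2) :
    (∀ w, w ∈ B.anc x → w ∈ B.anc y → w = B.v) ∧ x ≠ B.v ∧ y ≠ B.v := by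
  have key : ∀ w, w ∈ B.anc x → w ∈ B.anc y → w = B.v := by
    intro w hx hy
    by_contra hw
    have hpos := B.lev_pos hw
    set q := B.par^[B.lev w - 1] w with hq
    have hql : B.lev q = 1 := by rw [hq, B.lev_iter]; omega
    have hqx : q ∈ B.anc x := B.anc_trans hx ⟨_, rfl⟩
    have hqy : q ∈ B.anc y := B.anc_trans hy ⟨_, rfl⟩
    have : ((B.ancF x ∪ B.ancF y) ∩ B.nb).card ≤ 1 := by
      rw [Finset.card_le_one]
      have e : ∀ r ∈ (B.ancF x ∪ B.ancF y) ∩ B.nb, r = q := by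
        intro r hr
        simp only [Finset.mem_inter, Finset.mem_union, mem_ancF, mem_nb, ← lev_one] at hr
        rcases hr.1 with h1 | h1
        · exact B.anc_inj h1 hqx (hr.2.trans hql.symm)
        · exact B.anc_inj h1 hqy (hr.2.trans hql.symm)
      intro r hr r' hr'
      rw [e r hr, e r' hr']
    omega
  have one : ∀ x y : V, ((B.ancF x ∪ B.ancF y) ∩ B.nb).card = 2 → x ≠ B.v := by
    rintro x y h rfl
    have h2 := B.ancF_nb y
    have : (B.ancF B.v ∪ B.ancF y) ∩ B.nb ⊆ B.ancF y ∩ B.nb := by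
      intro w hw
      simp only [Finset.mem_inter, Finset.mem_union, mem_ancF] at hw ⊢
      refine ⟨?_, hw.2⟩
      rcases hw.1 with ⟨i, h3⟩ | h3
      · rw [B.iter_v] at h3
        rw [h3]; exact B.v_anc y
      · exact h3
    have := Finset.card_le_card this
    omega
  exact ⟨key, one x y h, one y x (by rw [Finset.union_comm]; exact h)⟩

lemma bad [DecidableEq V] {G : SimpleGraph V} (hG : G ≤ B.gr) (h : B.nb.card = 6)
    (hsn : 21 * B.sn3 G B.v < 2 * Fintype.card V) :
    ∃ X : Finset V, X.card = 2 ∧ ∀ u ∈ X, B.gr.Adj B.v u ∧ Fintype.card V ≤ 2 * sn G (fun _ => 3) u := by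
  obtain ⟨a, b, s, hS, hl, hN, hle, hcand⟩ := deg_six hG h hsn
  obtain ⟨hinter, hxv, hyv⟩ := hinter_of hl
  have hn : 7 ≤ Fintype.card V := by
    have : B.nb ⊂ Finset.univ := by
      rw [Finset.ssubset_univ_iff]
      intro e
      have : B.v ∈ B.nb := by rw [e]; simp
      rw [mem_nb] at this
      exact this.ne rfl
    have := Finset.card_lt_card this
    rw [Finset.card_univ] at this
    omega
  refine ⟨_, hN, ?_⟩
  intro u hu
  rw [Finset.mem_inter, mem_nb] at hu
  refine ⟨hu.2, ?_⟩
  set Λ := B.ancF (B.lb a) ∪ B.ancF (B.lb b) with hΛ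
  set S := B.DF a b (s + fun _ => 1) ∪ Λ with hSdef
  have split : ∀ w, w ∈ B.DF a b s ↔ w ∉ S := by
    intro w
    simp only [hSdef, hΛ, Finset.mem_union, mem_DF, mem_ancF, sval_add, sval_const]
    rcases z2_cases (B.sval s w) with h | h <;> simp [h]
  have hcard : Fintype.card V ≤ 2 * S.card := by
    have e : B.DF a b s = Sᶜ := by
      ext w; rw [split, Finset.mem_compl]
    have h1 : (B.DF a b s).card = Fintype.card V - S.card := by rw [e, Finset.card_compl]
    have h2 : (B.DF a b (s + fun _ => 1)).card ≤ S.card := Finset.card_le_card Finset.subset_union_left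
    omega
  have huS : u ∉ S := (split u).1 hu.1
  refine hcard.trans (Nat.mul_le_mul_left 2 ?_)
  refine sn_ge G u (B.gr.dist u) (by simp) ?_ S Λ huS ?_ Finset.subset_union_right ?_
  · intro x y hxy
    have := B.hc.dist_triangle (u := u) (v := x) (w := y)
    have h' : B.gr.dist x y = 1 := SimpleGraph.dist_eq_one_iff_adj.2 (hG hxy)
    omega
  · intro y hy x hx hxy
    rw [← split] at hx
    rcases hS.adj hx (hG hxy) with h1 | h1 | h1
    · rw [split] at h1; exact absurd hy h1
    · exact Finset.mem_union_left _ h1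
    · exact Finset.mem_union_right _ h1
  · intro t
    have sub : Λ.filter (fun c => B.gr.dist u c ≤ t) ⊆ {B.v} ∪
        ((B.ancF (B.lb a)).filter (fun w => 1 ≤ B.gr.dist B.v w ∧ B.gr.dist B.v w ≤ t)) ∪
        ((B.ancF (B.lb b)).filter (fun w => 1 ≤ B.gr.dist B.v w ∧ B.gr.dist B.v w ≤ t)) := by
      intro c hc
      rw [Finset.mem_filter] at hc
      by_cases hcv : c = B.v
      · simp [hcv]
      have h1 := far hG hS hinter hxv hyv hN.le hn hsn hcand hu.1 hu.2 hc.1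
      have h2 : 1 ≤ B.gr.dist B.v c := B.lev_pos hcv
      have h3 : B.gr.dist B.v c ≤ t := h1.trans hc.2
      have h4 := Finset.mem_union.1 hc.1
      simp only [Finset.mem_union, Finset.mem_filter, h2, h3]
      tauto
    rcases Nat.eq_zero_or_pos t with rfl | ht
    · rw [Nat.mul_zero, Nat.le_zero, Finset.card_eq_zero, Finset.eq_empty_iff_forall_notMem]
      intro c hc
      rw [Finset.mem_filter, Nat.le_zero, (B.hc).dist_eq_zero_iff] at hc
      rw [← hc.2] at hc
      exact huS (Finset.mem_union_right _ hc.1)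
    · have := (Finset.card_le_card sub).trans ((Finset.card_union_le _ _).trans
        (Nat.add_le_add_right (Finset.card_union_le _ _) _))
      have a1 := (B.ancF_inj (B.lb a)).card_le 1 t
      have a2 := (B.ancF_inj (B.lb b)).card_le 1 t
      rw [Finset.card_singleton] at this
      omega

end BT


lemma exists_BT {V : Type} (L : Lab V) (hc : L.gr.Connected) (v : V) :
    ∃ B : BT V, B.toLab = L ∧ B.v = v := by
  obtain ⟨par, h1, h2⟩ := exists_par L.gr hc v
  exact ⟨{ toLab := L, hc := hc, v := v, par := par, par_v := h1, par_spec := h2 }, rfl, rfl⟩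

open Classical in
lemma vertex_facts {V : Type} [Fintype V] (L : Lab V) (hc : L.gr.Connected) (G : SimpleGraph V)
    (hG : G ≤ L.gr) (v : V) :
    (L.gr.degree v ≤ 3 → Fintype.card V - 1 ≤ sn G (fun _ => 3) v) ∧
    (L.gr.degree v ≤ 5 → Fintype.card V ≤ 3 * sn G (fun _ => 3) v + 1) ∧
    (L.gr.degree v = 6 → 21 * sn G (fun _ => 3) v < 2 * Fintype.card V →
      ∃ X : Finset V, X.card = 2 ∧ ∀ u ∈ X, L.gr.Adj v u ∧
        Fintype.card V ≤ 2 * sn G (fun _ => 3) u) := by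
  obtain ⟨B, rfl, rfl⟩ := exists_BT L hc v
  have e : B.gr.degree B.v = B.nb.card := by
    rw [← SimpleGraph.card_neighborFinset_eq_degree]
    congr 1
    ext w
    rw [SimpleGraph.mem_neighborFinset, BT.mem_nb]
  rw [e]
  exact ⟨BT.deg_le_three hG, BT.deg_le_five hG, BT.bad hG⟩

lemma vertex_ineq (n d b f : ℕ) (β : ℕ) (hn : 2 ≤ n) (hbd : b ≤ d)
    (h3 : d ≤ 3 → n - 1 ≤ f) (h5 : d ≤ 5 → n ≤ 3 * f + 1)
    (hβ : (β = 1 ∧ d = 6 ∧ 21 * f < 2 * n) ∨ (β = 0 ∧ (d = 6 → 2 * n ≤ 21 * f)))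
    (hb : 0 < b → n ≤ 2 * f) :
    14 * n + n * b ≤ 21 * f + 7 + 2 * (n * d) + 2 * n * β := by
  have k1 : n * b ≤ n * d := Nat.mul_le_mul_left n hbd
  rcases Nat.eq_zero_or_pos b with rfl | hb0
  · rcases hβ with ⟨rfl, rfl, h⟩ | ⟨rfl, h⟩
    · omega
    · by_cases d3 : d ≤ 3
      · have := h3 d3
        omega
      · by_cases d5 : d ≤ 5
        · have := h5 d5
          have : n * 4 ≤ n * d := Nat.mul_le_mul_left n (by omega)
          omega
        · by_cases d6 : d = 6
          · have := h d6
            subst d6; omega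
          · have : n * 7 ≤ n * d := Nat.mul_le_mul_left n (by omega)
            omega
  · have hf := hb hb0
    rcases hβ with ⟨rfl, rfl, h⟩ | ⟨rfl, h⟩
    · omega
    · by_cases d3 : d ≤ 3
      · have := h3 d3
        omega
      · have : n * 4 ≤ n * d := Nat.mul_le_mul_left n (by omega)
        omega

open Classical in
theorem main_of_lab {V : Type} [Fintype V] (L : Lab V) (G : SimpleGraph V) (hG : G ≤ L.gr)
    (hconn : G.Connected) (hn : 2 ≤ Fintype.card V) : survivingRate G (fun _ => 3) > 2 / 21 := by
  have hc : L.gr.Connected := hconn.mono hG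
  set n := Fintype.card V with hndef
  let f : V → ℕ := fun x => sn G (fun _ => 3) x
  let bad : V → Prop := fun v => L.gr.degree v = 6 ∧ 21 * f v < 2 * n
  have hX : ∀ v, bad v → ∃ X : Finset V, X.card = 2 ∧ ∀ u ∈ X, L.gr.Adj v u ∧ n ≤ 2 * f u :=
    fun v hv => (vertex_facts L hc G hG v).2.2 hv.1 hv.2
  choose! X hX2 hX3 using hX
  let b : V → ℕ := fun x => (Finset.univ.filter (fun v => bad v ∧ x ∈ X v)).card
  let β : V → ℕ := fun x => if bad x then 1 else 0
  have hbd : ∀ x, b x ≤ L.gr.degree x := by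
    intro x
    rw [← SimpleGraph.card_neighborFinset_eq_degree]
    apply Finset.card_le_card
    intro v hv
    rw [Finset.mem_filter] at hv
    rw [SimpleGraph.mem_neighborFinset]
    exact (hX3 v hv.2.1 x hv.2.2).1.symm
  have hb0 : ∀ x, 0 < b x → n ≤ 2 * f x := by
    intro x hx
    obtain ⟨v, hv⟩ := Finset.card_pos.1 hx
    rw [Finset.mem_filter] at hv
    exact (hX3 v hv.2.1 x hv.2.2).2
  have hb_sum : ∑ x, b x = 2 * ∑ x, β x := by
    have e : ∀ x, b x = ∑ v, if bad v ∧ x ∈ X v then 1 else 0 := by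
      intro x
      simp only [b, Finset.card_filter]
    simp only [e]
    rw [Finset.sum_comm, Finset.mul_sum]
    apply Finset.sum_congr rfl
    intro v _
    by_cases hv : bad v
    · simp only [hv, true_and, β, if_true]
      rw [← Finset.card_filter, Finset.filter_mem_eq_inter, Finset.univ_inter, hX2 v hv, mul_one]
    · simp [hv, β]
  have hpt : ∀ x, 14 * n + n * b x ≤ 21 * f x + 7 + 2 * (n * L.gr.degree x) + 2 * n * β x := by
    intro x
    obtain ⟨h1, h2, h3⟩ := vertex_facts L hc G hG x
    refine vertex_ineq n _ _ (f x) _ hn (hbd x) h1 h2 ?_ (hb0 x)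
    by_cases hx : bad x
    · left
      exact ⟨by simp [β, hx], hx.1, hx.2⟩
    · right
      refine ⟨by simp [β, hx], fun h => ?_⟩
      by_contra hlt
      exact hx ⟨h, by omega⟩
  have hsum := Finset.sum_le_sum (fun x (_ : x ∈ Finset.univ) => hpt x)
  simp only [Finset.sum_add_distrib, ← Finset.mul_sum, Finset.sum_const, Finset.card_univ,
    smul_eq_mul, ← hndef] at hsum
  rw [SimpleGraph.sum_degrees_eq_twice_card_edges, hb_sum] at hsum
  have hE : L.gr.edgeFinset.card ≤ 3 * n - 3 := by
    rw [SimpleGraph.edgeFinset_card]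
    exact L.edge_bound
  set E := L.gr.edgeFinset.card
  have k : n * E + 3 * n ≤ 3 * (n * n) := by
    have : n * (E + 3) ≤ n * (3 * n) := Nat.mul_le_mul_left n (by omega)
    linarith
  have hfin : 2 * (n * n) < 21 * ∑ x, f x := by
    nlinarith
  unfold survivingRate
  rw [gt_iff_lt, lt_div_iff₀ (by positivity)]
  have : (2 : ℝ) * ((n : ℝ) * n) < 21 * ∑ x, (f x : ℝ) := by exact_mod_cast hfin
  change 2 / 21 * (n : ℝ) ^ 2 < ∑ x, (f x : ℝ)
  linarith


lemma lc_cross {Y : Set LP} (P : LP → Prop) {a b : LP} (h : LC Y a b) (ha : P a) (hb : ¬ P b) :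
    ∃ p q, q ∈ Y ∧ LAdj p q ∧ P p ∧ ¬ P q := by
  induction h with
  | refl => exact absurd ha hb
  | @tail c d h1 h2 ih =>
    by_cases hc : P c
    · exact ⟨c, d, h2.1, h2.2, hc, hb⟩
    · exact ih hc

/-- The set of points reachable from a base point is connected. -/
lemma lconn_reach (Y : Set LP) (c : LP) : LConn {a | LC Y c a} := by
  apply lconn_of_base c (Relation.ReflTransGen.refl : LC Y c c)
  intro b hb
  have hb' : LC Y c b := hb
  clear hb
  induction hb' with
  | refl => exact Relation.ReflTransGen.refl
  | tail h1 h2 ih => exact ih.tail ⟨h1.tail h2, h2.2⟩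

open Classical in
lemma extend_lab {ι : Type} (m : ℕ) : ∀ (φ : LP → Option ι)
    (_ : ∀ i, LConn {a | φ a = some i}) (_ : {a | φ a = none}.Finite)
    (_ : {a | φ a = none}.ncard = m),
    ∃ ψ : LP → ι, (∀ a i, φ a = some i → ψ a = i) ∧ ∀ i, LConn {a | ψ a = i} := by
  induction m with
  | zero =>
    intro φ hc hf hm
    rw [Set.ncard_eq_zero hf] at hm
    have : ∀ a, ∃ i, φ a = some i := by
      intro a
      rw [← Option.ne_none_iff_exists']
      intro h
      have : a ∈ {a | φ a = none} := h
      rw [hm] at this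
      exact this
    choose ψ hψ using this
    refine ⟨ψ, ?_, ?_⟩
    · intro a i h
      rw [hψ a] at h
      exact Option.some.inj h
    · intro i
      convert hc i using 1
      ext a
      simp [hψ a]
  | succ m ih =>
    intro φ hc hf hm
    have hne : {a | φ a = none}.Nonempty := by
      rw [Set.nonempty_iff_ne_empty]
      intro h
      rw [h, Set.ncard_empty] at hm
      omega
    obtain ⟨b, hb⟩ := hne
    obtain ⟨a, ha⟩ : ∃ a, a ∉ {a | φ a = none} := by
      by_contra hcon
      push Not at hcon
      exact Set.infinite_univ (hf.subset (fun a _ => hcon a))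
    obtain ⟨p, q, -, hpq, hp, hq⟩ := lc_cross (fun a => φ a ≠ none) (lconn_univ a trivial b trivial)
      ha (by simpa using hb)
    simp only [ne_eq, not_not] at hq
    obtain ⟨i, hi⟩ := Option.ne_none_iff_exists'.1 hp
    have e : {a | Function.update φ q (some i) a = none} = {a | φ a = none} \ {q} := by
      ext a
      by_cases haq : a = q
      · subst haq; simp
      · simp [haq]
    have c1 : ∀ j, LConn {a | Function.update φ q (some i) a = some j} := by
      intro j
      by_cases hij : j = i
      · subst hij
        have e2 : {a | Function.update φ q (some j) a = some j} = {a | φ a = some j} ∪ {q} := by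
          ext a
          by_cases haq : a = q
          · subst haq; simp
          · simp [haq]
        rw [e2]
        exact (hc j).union (lconn_singleton q) (a := p) (b := q) hi rfl hpq
      · convert hc j using 1
        ext a
        by_cases haq : a = q
        · subst haq
          simp [hq, Ne.symm hij]
        · simp [haq]
    have c2 : {a | Function.update φ q (some i) a = none}.Finite := by
      rw [e]
      exact hf.subset Set.diff_subset
    have c3 : {a | Function.update φ q (some i) a = none}.ncard = m := by
      rw [e, Set.ncard_diff_singleton_of_mem (by exact hq), hm]
      rfl
    obtain ⟨ψ, h1, h2⟩ := ih (Function.update φ q (some i)) c1 c2 c3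
    refine ⟨ψ, ?_, h2⟩
    intro a j haj
    apply h1
    rw [Function.update_of_ne]
    · exact haj
    · rintro rfl
      rw [hq] at haj
      exact absurd haj (by simp)

open Classical in
lemma lab_of_partial {V : Type} [Nonempty V] (F : V → Set LP) (hconn : ∀ v, LConn (F v))
    (hne : ∀ v, (F v).Nonempty) (hdis : ∀ u v a, a ∈ F u → a ∈ F v → u = v) (N : ℕ)
    (hN : ∀ v, F v ⊆ LBox N) : ∃ L : Lab V, ∀ v, ∀ a ∈ F v, L.lb a = v := by
  let φ : LP → Option (Option V) := fun a =>
    if h : ∃ v, a ∈ F v then some (some h.choose) else if a ∈ LBox N then none else some none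
  have φF : ∀ v a, φ a = some (some v) ↔ a ∈ F v := by
    intro v a
    by_cases h : ∃ v, a ∈ F v
    · simp only [φ, dif_pos h, Option.some.injEq]
      constructor
      · intro e
        have := h.choose_spec
        rwa [e] at this
      · intro hv
        exact hdis _ _ a h.choose_spec hv
    · have h' : a ∉ F v := fun hv => h ⟨v, hv⟩
      simp only [φ, dif_neg h, h', iff_false]
      split_ifs <;> simp
  have φO : ∀ a, φ a = some none ↔ a ∉ LBox N := by
    intro a
    by_cases h : ∃ v, a ∈ F v
    · simp only [φ, dif_pos h]
      obtain ⟨v, hv⟩ := h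
      simp [hN v hv]
    · simp only [φ, dif_neg h]
      split_ifs with h1 <;> simp [h1]
  obtain ⟨ψ, h1, h2⟩ := extend_lab _ φ (by
    rintro (_ | v)
    · have : {a | φ a = some none} = (LBox N)ᶜ := by ext a; simp [φO]
      rw [this]; exact lout_conn N
    · have : {a | φ a = some (some v)} = F v := by ext a; exact φF v a
      rw [this]; exact hconn v) ((lbox_finite N).subset (by
    intro a ha
    by_contra hc
    rw [← φO] at hc
    rw [Set.mem_ofPred_eq, hc] at ha
    exact absurd ha (by simp))) rfl
  have hout : ∀ a, a ∉ LBox N → ψ a = none := fun a ha => h1 a _ ((φO a).2 ha)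
  have hin : ∀ v, ∀ a ∈ F v, ψ a = some v := fun v a ha => h1 a _ ((φF v a).2 ha)
  obtain ⟨v0⟩ := ‹Nonempty V›
  obtain ⟨a0, ha0⟩ := hne v0
  have hb0 : ((N : ℤ) + 1, (0 : ℤ)) ∉ LBox N := by simp [LBox]
  obtain ⟨p, q, -, hpq, hp, hq⟩ := lc_cross (fun a => ψ a = none)
    (lconn_univ _ trivial a0 trivial) (hout _ hb0) (by rw [hin v0 a0 ha0]; simp)
  obtain ⟨o, ho⟩ := Option.ne_none_iff_exists'.1 hq
  have fib : ∀ v, v ≠ o → {a | (ψ a).getD o = v} = {a | ψ a = some v} := by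
    intro v hv
    ext a
    simp only [Set.mem_ofPred_eq]
    rcases h : ψ a with _ | w
    · simp [hv.symm]
    · simp
  refine ⟨⟨fun a => (ψ a).getD o, ?_, ?_, N, o, ?_⟩, ?_⟩
  · intro v
    by_cases hv : v = o
    · subst hv
      have : {a | (ψ a).getD v = v} = {a | ψ a = none} ∪ {a | ψ a = some v} := by
        ext a
        simp only [Set.mem_ofPred_eq, Set.mem_union]
        rcases h : ψ a with _ | w <;> simp
      rw [this]
      exact (h2 none).union (h2 (some v)) hp ho hpq
    · rw [fib v hv]; exact h2 _
  · intro v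
    obtain ⟨a, ha⟩ := hne v
    exact ⟨a, by simp [hin v a ha]⟩
  · intro a ha
    simp [hout a ha]
  · intro v a ha
    simp [hin v a ha]


/-- Lattice point scaled by `h`. -/
def lpt (h : ℝ) (a : LP) : ℝ × ℝ := (h * a.1, h * a.2)

def nbh (h : ℝ) (X : Set (ℝ × ℝ)) : Set LP := {a | ∃ x ∈ X, dist (lpt h a) x < h}

noncomputable def rnd (h : ℝ) (x : ℝ × ℝ) : LP := (round (x.1 / h), round (x.2 / h))

lemma dist_rnd {h : ℝ} (hh : 0 < h) (x : ℝ × ℝ) : dist (lpt h (rnd h x)) x < h := by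
  have key : ∀ t : ℝ, |h * (round (t / h) : ℝ) - t| < h := by
    intro t
    have h1 := abs_sub_round (t / h)
    have h2 : h * (round (t / h) : ℝ) - t = -(h * (t / h - round (t / h))) := by
      field_simp
      ring
    rw [h2, abs_neg, abs_mul, abs_of_pos hh]
    nlinarith
  rw [Prod.dist_eq, Real.dist_eq, Real.dist_eq]
  exact max_lt (key _) (key _)

lemma rnd_mem {h : ℝ} (hh : 0 < h) {X : Set (ℝ × ℝ)} {x : ℝ × ℝ} (hx : x ∈ X) :
    rnd h x ∈ nbh h X := ⟨x, hx, dist_rnd hh x⟩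

lemma int_close {h : ℝ} (hh : 0 < h) {m n : ℤ} {t : ℝ} (h1 : |h * (m : ℝ) - t| < h)
    (h2 : |h * (n : ℝ) - t| < h) : m = n ∨ m = n + 1 ∨ n = m + 1 := by
  rw [abs_lt] at h1 h2
  have h3 : (m : ℝ) - n < 2 := by
    by_contra hc
    push Not at hc
    nlinarith
  have h4 : (n : ℝ) - m < 2 := by
    by_contra hc
    push Not at hc
    nlinarith
  have h5 : m - n < 2 := by exact_mod_cast h3
  have h6 : n - m < 2 := by exact_mod_cast h4
  omega

lemma lc_step_h {Y : Set LP} {x x' y : ℤ} (h : x = x' ∨ x = x' + 1 ∨ x' = x + 1)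
    (hY : (x', y) ∈ Y) : LC Y (x, y) (x', y) := by
  rcases h with rfl | rfl | rfl
  · exact Relation.ReflTransGen.refl
  · exact Relation.ReflTransGen.single ⟨hY, 3, by simp [ldir]⟩
  · exact Relation.ReflTransGen.single ⟨hY, 0, by simp [ldir]⟩

lemma lc_step_v {Y : Set LP} {x y y' : ℤ} (h : y = y' ∨ y = y' + 1 ∨ y' = y + 1)
    (hY : (x, y') ∈ Y) : LC Y (x, y) (x, y') := by
  rcases h with rfl | rfl | rfl
  · exact Relation.ReflTransGen.refl
  · exact Relation.ReflTransGen.single ⟨hY, 5, by simp [ldir]⟩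
  · exact Relation.ReflTransGen.single ⟨hY, 2, by simp [ldir]⟩

lemma nbh_step {h : ℝ} (hh : 0 < h) {X : Set (ℝ × ℝ)} {x : ℝ × ℝ} (hx : x ∈ X) {a b : LP}
    (ha : dist (lpt h a) x < h) (hb : dist (lpt h b) x < h) : LC (nbh h X) a b := by
  obtain ⟨a1, a2⟩ := a
  obtain ⟨b1, b2⟩ := b
  have hb' := hb
  rw [Prod.dist_eq, max_lt_iff, Real.dist_eq, Real.dist_eq] at ha hb
  simp only [lpt] at ha hb
  have hm : ((b1, a2) : LP) ∈ nbh h X := by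
    refine ⟨x, hx, ?_⟩
    rw [Prod.dist_eq, max_lt_iff, Real.dist_eq, Real.dist_eq]
    exact ⟨hb.1, ha.2⟩
  exact (lc_step_h (int_close hh ha.1 hb.1) hm).trans
    (lc_step_v (int_close hh ha.2 hb.2) ⟨x, hx, hb'⟩)

lemma nbh_conn {h : ℝ} (hh : 0 < h) {X : Set (ℝ × ℝ)} (hX : IsPreconnected X) :
    LConn (nbh h X) := by
  intro a ha b hb
  by_contra hcon
  let U : Set (ℝ × ℝ) := ⋃ c ∈ {c | LC (nbh h X) a c}, Metric.ball (lpt h c) h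
  let W : Set (ℝ × ℝ) := ⋃ c ∈ {c | c ∈ nbh h X ∧ ¬ LC (nbh h X) a c}, Metric.ball (lpt h c) h
  have hU : IsOpen U := isOpen_biUnion (fun _ _ => Metric.isOpen_ball)
  have hW : IsOpen W := isOpen_biUnion (fun _ _ => Metric.isOpen_ball)
  have memU : ∀ x, x ∈ U ↔ ∃ c, LC (nbh h X) a c ∧ dist (lpt h c) x < h := by
    intro x
    simp only [U, Set.mem_iUnion, Metric.mem_ball', exists_prop, Set.mem_ofPred_eq]
  have memW : ∀ x, x ∈ W ↔ ∃ c, (c ∈ nbh h X ∧ ¬ LC (nbh h X) a c) ∧ dist (lpt h c) x < h := by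
    intro x
    simp only [W, Set.mem_iUnion, Metric.mem_ball', exists_prop, Set.mem_ofPred_eq]
  obtain ⟨xa, hxa, hda⟩ := ha
  obtain ⟨xb, hxb, hdb⟩ := hb
  obtain ⟨x, hx, hxU, hxW⟩ := hX U W hU hW (by
    intro x hx
    by_cases hr : LC (nbh h X) a (rnd h x)
    · left; rw [memU]; exact ⟨_, hr, dist_rnd hh x⟩
    · right; rw [memW]; exact ⟨_, ⟨rnd_mem hh hx, hr⟩, dist_rnd hh x⟩)
    ⟨xa, hxa, (memU xa).2 ⟨a, Relation.ReflTransGen.refl, hda⟩⟩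
    ⟨xb, hxb, (memW xb).2 ⟨b, ⟨⟨xb, hxb, hdb⟩, hcon⟩, hdb⟩⟩
  obtain ⟨c, hc1, hc2⟩ := (memU x).1 hxU
  obtain ⟨d, hd1, hd2⟩ := (memW x).1 hxW
  exact hd1.2 (hc1.trans (nbh_step hh hx hc2 hd2))

lemma nbh_bdd {h : ℝ} (hh : 0 < h) {X : Set (ℝ × ℝ)} (hX : Bornology.IsBounded X) :
    ∃ N : ℕ, nbh h X ⊆ LBox N := by
  obtain ⟨R, hR⟩ := hX.subset_ball 0
  obtain ⟨N, hN⟩ := exists_nat_gt ((R + h) / h)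
  rw [div_lt_iff₀ hh] at hN
  refine ⟨N, ?_⟩
  rintro ⟨a1, a2⟩ ⟨x, hx, hd⟩
  have h1 : dist x 0 < R := Metric.mem_ball.1 (hR hx)
  have h2 : dist (lpt h (a1, a2)) 0 < R + h := by
    have := dist_triangle (lpt h (a1, a2)) x 0
    linarith
  rw [Prod.dist_eq, max_lt_iff, Real.dist_eq, Real.dist_eq] at h2
  simp only [lpt, Prod.fst_zero, Prod.snd_zero, sub_zero] at h2
  have key : ∀ m : ℤ, |h * (m : ℝ)| < R + h → -(N : ℤ) ≤ m ∧ m ≤ N := by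
    intro m hm
    rw [abs_lt] at hm
    have k1 : (m : ℝ) < N := by nlinarith
    have k2 : -(N : ℝ) < m := by nlinarith
    constructor
    · have : (-(N : ℤ)) < m := by exact_mod_cast k2
      omega
    · have : m < (N : ℤ) := by exact_mod_cast k1
      omega
  have k1 := key a1 h2.1
  have k2 := key a2 h2.2
  exact ⟨k1.1, k1.2, k2.1, k2.2⟩

lemma fin_min {ι : Type} [Finite ι] (P : ι → ℝ → Prop)
    (mono : ∀ i r r', 0 < r' → r' ≤ r → P i r → P i r') (h : ∀ i, ∃ r > 0, P i r) :
    ∃ r > 0, ∀ i, P i r := by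
  rcases isEmpty_or_nonempty ι with he | he
  · exact ⟨1, one_pos, fun i => (he.false i).elim⟩
  · choose r hr hP using h
    obtain ⟨i0, h0⟩ := Finite.exists_min r
    exact ⟨r i0, hr i0, fun i => mono i _ _ (hr i0) (h0 i) (hP i)⟩

lemma compact_sep {K K' : Set (ℝ × ℝ)} (hK : IsCompact K) (hK' : IsCompact K')
    (hd : Disjoint K K') : ∃ r > 0, ∀ x ∈ K, ∀ y ∈ K', (r : ℝ) ≤ dist x y := by
  obtain ⟨r, hr, h⟩ := Metric.exists_pos_forall_lt_edist hK hK'.isClosed hd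
  refine ⟨r, by exact_mod_cast hr, fun x hx y hy => ?_⟩
  have := h x hx y hy
  rw [edist_nndist, ENNReal.coe_lt_coe] at this
  rw [← coe_nndist]
  exact_mod_cast this.le

namespace PlaneEmbedding

variable {V : Type} {G : SimpleGraph V} (E : PlaneEmbedding G)

def A (u w : V) : Set (ℝ × ℝ) := E.arc u w '' Set.Icc 0 1

lemma A_compact {u w : V} (h : G.Adj u w) : IsCompact (E.A u w) :=
  isCompact_Icc.image (E.arc_cont h)

lemma A_conn {u w : V} (h : G.Adj u w) : IsPreconnected (E.A u w) :=
  isPreconnected_Icc.image _ (E.arc_cont h).continuousOn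

lemma A_left {u w : V} (h : G.Adj u w) : E.pos u ∈ E.A u w :=
  ⟨0, by simp, E.arc_zero h⟩

lemma A_right {u w : V} (h : G.Adj u w) : E.pos w ∈ E.A u w :=
  ⟨1, by simp, E.arc_one h⟩

lemma A_avoid {u w z : V} (h : G.Adj u w) (h1 : z ≠ u) (h2 : z ≠ w) : E.pos z ∉ E.A u w := by
  rintro ⟨t, ht, he⟩
  rcases eq_or_lt_of_le ht.1 with h0 | h0
  · rw [← h0, E.arc_zero h] at he
    exact h1 (E.pos_inj he.symm)
  · rcases eq_or_lt_of_le ht.2 with h3 | h3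
    · rw [h3, E.arc_one h] at he
      exact h2 (E.pos_inj he.symm)
    · exact E.arc_avoid h z ⟨t, ⟨h0, h3⟩, he⟩

/-- Arc without the discs around vertices. -/
def K (r : ℝ) (u w : V) : Set (ℝ × ℝ) := E.A u w \ ⋃ z, Metric.ball (E.pos z) r

lemma K_compact (r : ℝ) {u w : V} (h : G.Adj u w) : IsCompact (E.K r u w) :=
  (E.A_compact h).diff (isOpen_iUnion fun _ => Metric.isOpen_ball)

lemma K_disj {r : ℝ} (hr : 0 < r) {u w x y : V} (h : G.Adj u w) (h' : G.Adj x y)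
    (hne : s(u, w) ≠ s(x, y)) : Disjoint (E.K r u w) (E.K r x y) := by
  rw [Set.disjoint_left]
  rintro p ⟨hp1, hp2⟩ ⟨hp3, -⟩
  have := (E.arc_meet h h' hne ⟨hp1, hp3⟩).1
  apply hp2
  rw [Set.mem_iUnion]
  rcases this with rfl | rfl
  · exact ⟨u, Metric.mem_ball_self hr⟩
  · exact ⟨w, Metric.mem_ball_self hr⟩

lemma exists_r [Finite V] : ∃ r > 0, (∀ u w, u ≠ w → 4 * r ≤ dist (E.pos u) (E.pos w)) ∧
    (∀ u w z, G.Adj u w → z ≠ u → z ≠ w → ∀ x ∈ E.A u w, 3 * r ≤ dist (E.pos z) x) := by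
  obtain ⟨r1, h1, k1⟩ := fin_min (ι := V × V)
    (fun i r => i.1 ≠ i.2 → 4 * r ≤ dist (E.pos i.1) (E.pos i.2))
    (fun i r r' _ hle h hne => by have := h hne; linarith) (by
      rintro ⟨u, w⟩
      by_cases he : u = w
      · exact ⟨1, one_pos, fun h => absurd he h⟩
      · have : 0 < dist (E.pos u) (E.pos w) := dist_pos.2 (fun h => he (E.pos_inj h))
        exact ⟨dist (E.pos u) (E.pos w) / 4, by positivity, fun _ => by linarith⟩)
  obtain ⟨r2, h2, k2⟩ := fin_min (ι := V × V × V)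
    (fun i r => G.Adj i.1 i.2.1 → i.2.2 ≠ i.1 → i.2.2 ≠ i.2.1 →
      ∀ x ∈ E.A i.1 i.2.1, 3 * r ≤ dist (E.pos i.2.2) x)
    (fun i r r' _ hle h a b c x hx => by have := h a b c x hx; linarith) (by
      rintro ⟨u, w, z⟩
      by_cases he : G.Adj u w ∧ z ≠ u ∧ z ≠ w
      · obtain ⟨r, hr, h⟩ := compact_sep (K := {E.pos z}) isCompact_singleton (E.A_compact he.1)
          (by rw [Set.disjoint_singleton_left]; exact E.A_avoid he.1 he.2.1 he.2.2)
        refine ⟨r / 3, by positivity, fun _ _ _ x hx => ?_⟩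
        have := h _ rfl x hx
        linarith
      · exact ⟨1, one_pos, fun a b c => absurd ⟨a, b, c⟩ he⟩)
  refine ⟨min r1 r2, lt_min h1 h2, ?_, ?_⟩
  · intro u w hne
    have := k1 (u, w) hne
    have := min_le_left r1 r2
    simp only at *
    linarith
  · intro u w z a b c x hx
    have := k2 (u, w, z) a b c x hx
    have := min_le_right r1 r2
    simp only at *
    linarith

lemma exists_h [Finite V] {r : ℝ} (hr : 0 < r) : ∃ h > 0, h ≤ r ∧
    ∀ u w x y, G.Adj u w → G.Adj x y → s(u, w) ≠ s(x, y) →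
      ∀ p ∈ E.K r u w, ∀ q ∈ E.K r x y, 2 * h ≤ dist p q := by
  obtain ⟨d, hd, k⟩ := fin_min (ι := (V × V) × (V × V))
    (fun i d => G.Adj i.1.1 i.1.2 → G.Adj i.2.1 i.2.2 → s(i.1.1, i.1.2) ≠ s(i.2.1, i.2.2) →
      ∀ p ∈ E.K r i.1.1 i.1.2, ∀ q ∈ E.K r i.2.1 i.2.2, d ≤ dist p q)
    (fun i r r' _ hle h a b c p hp q hq => hle.trans (h a b c p hp q hq)) (by
      rintro ⟨⟨u, w⟩, ⟨x, y⟩⟩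
      by_cases he : G.Adj u w ∧ G.Adj x y ∧ s(u, w) ≠ s(x, y)
      · obtain ⟨d, hd, h⟩ := compact_sep (E.K_compact r he.1) (E.K_compact r he.2.1)
          (E.K_disj hr he.1 he.2.1 he.2.2)
        exact ⟨d, hd, fun _ _ _ => h⟩
      · exact ⟨1, one_pos, fun a b c => absurd ⟨a, b, c⟩ he⟩)
  refine ⟨min r (d / 2), lt_min hr (by positivity), min_le_left _ _, ?_⟩
  intro u w x y a b c p hp q hq
  have := k ((u, w), (x, y)) a b c p hp q hq
  have := min_le_right r (d / 2)
  linarith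

end PlaneEmbedding

theorem exists_lab {V : Type} [Fintype V] [Nonempty V] (G : SimpleGraph V) (E : PlaneEmbedding G) :
    ∃ L : Lab V, G ≤ L.gr := by
  obtain ⟨r, hr, hr1, hr2⟩ := E.exists_r
  obtain ⟨h, hh, hhr, hK⟩ := E.exists_h hr
  let S : V → Set LP := fun u => nbh h (Metric.ball (E.pos u) r)
  let M : V → V → Set LP := fun u w => nbh h (E.A u w) \ ⋃ z, S z
  let lt : V → V → Prop := fun u w => Fintype.equivFin V u < Fintype.equivFin V w
  let Y : V → Set LP := fun u => S u ∪ {a | ∃ w, G.Adj u w ∧ lt u w ∧ a ∈ M u w}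
  let c : V → LP := fun u => rnd h (E.pos u)
  let F : V → Set LP := fun u => {a | LC (Y u) (c u) a}
  have cS : ∀ u, c u ∈ S u := fun u => rnd_mem hh (Metric.mem_ball_self hr)
  have cY : ∀ u, c u ∈ Y u := fun u => Or.inl (cS u)
  have FY : ∀ u, F u ⊆ Y u := fun u a ha => (LC.symm (cY u) ha).2
  have Sd : ∀ u a, a ∈ S u → dist (lpt h a) (E.pos u) < r + h := by
    rintro u a ⟨x, hx, hd⟩
    have h1 := dist_triangle (lpt h a) x (E.pos u)
    have h2 := Metric.mem_ball.1 hx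
    linarith
  have SS : ∀ u w a, a ∈ S u → a ∈ S w → u = w := by
    intro u w a ha hb
    by_contra hne
    have h1 := Sd u a ha
    have h2 := Sd w a hb
    have h3 := hr1 u w hne
    have h4 := dist_triangle_left (E.pos u) (E.pos w) (lpt h a)
    linarith
  have MK : ∀ u w a, a ∈ M u w → ∃ x ∈ E.K r u w, dist (lpt h a) x < h := by
    rintro u w a ⟨⟨x, hx, hd⟩, ha⟩
    refine ⟨x, ⟨hx, ?_⟩, hd⟩
    intro hx2
    apply ha
    rw [Set.mem_iUnion] at hx2 ⊢
    obtain ⟨z, hz⟩ := hx2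
    exact ⟨z, x, hz, hd⟩
  have MM : ∀ u w x y a, G.Adj u w → G.Adj x y → a ∈ M u w → a ∈ M x y → s(u, w) = s(x, y) := by
    intro u w x y a h1 h2 ha hb
    by_contra hne
    obtain ⟨p, hp, hp'⟩ := MK _ _ _ ha
    obtain ⟨q, hq, hq'⟩ := MK _ _ _ hb
    have h3 := hK u w x y h1 h2 hne p hp q hq
    have h4 := dist_triangle_left p q (lpt h a)
    linarith
  have YY : ∀ u w a, a ∈ Y u → a ∈ Y w → u = w := by
    rintro u w a (ha | ⟨x, hx, hlx, ha⟩) (hb | ⟨y, hy, hly, hb⟩)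
    · exact SS u w a ha hb
    · exact absurd (Set.mem_iUnion.2 ⟨u, ha⟩) hb.2
    · exact absurd (Set.mem_iUnion.2 ⟨w, hb⟩) ha.2
    · have := MM _ _ _ _ a hx hy ha hb
      rw [Sym2.eq_iff] at this
      rcases this with ⟨h1, -⟩ | ⟨h1, h2⟩
      · exact h1
      · subst h1 h2
        exact absurd hlx (not_lt.2 (le_of_lt hly))
  have SF : ∀ u, S u ⊆ F u := by
    intro u a ha
    exact (nbh_conn hh ((convex_ball (E.pos u) r).isPreconnected) _ (cS u) a ha).mono
      Set.subset_union_left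
  obtain ⟨N, hN⟩ : ∃ N : ℕ, ∀ u, F u ⊆ LBox N := by
    let X : Set (ℝ × ℝ) := ⋃ p : V × V, (Metric.ball (E.pos p.1) r ∪ {x | G.Adj p.1 p.2 ∧ x ∈ E.A p.1 p.2})
    have hX : Bornology.IsBounded X := by
      rw [Bornology.isBounded_iUnion]
      rintro ⟨u, w⟩
      refine Metric.isBounded_ball.union ?_
      by_cases hadj : G.Adj u w
      · exact (E.A_compact hadj).isBounded.subset (fun x hx => hx.2)
      · exact Bornology.isBounded_empty.subset (fun x hx => hadj hx.1)
    obtain ⟨N, hN⟩ := nbh_bdd hh hX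
    refine ⟨N, fun u a ha => hN ?_⟩
    rcases FY u ha with ⟨x, hx, hd⟩ | ⟨w, hw, -, ⟨x, hx, hd⟩, -⟩
    · exact ⟨x, Set.mem_iUnion.2 ⟨(u, u), Or.inl hx⟩, hd⟩
    · exact ⟨x, Set.mem_iUnion.2 ⟨(u, w), Or.inr ⟨hw, hx⟩⟩, hd⟩
  obtain ⟨L, hL⟩ := lab_of_partial F (fun v => lconn_reach _ _) (fun v => ⟨c v, SF v (cS v)⟩)
    (fun u v a ha hb => YY u v a (FY u ha) (FY v hb)) N hN
  refine ⟨L, ?_⟩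
  have key : ∀ u w, G.Adj u w → lt u w → L.gr.Adj u w := by
    intro u w hadj hlt
    let Q : Set LP := nbh h (E.A u w) \ S w
    have hcu : c u ∈ nbh h (E.A u w) := rnd_mem hh (E.A_left hadj)
    have hcw : c w ∈ nbh h (E.A u w) := rnd_mem hh (E.A_right hadj)
    have huQ : c u ∈ Q := ⟨hcu, fun hc => hadj.ne (SS u w _ (cS u) hc)⟩
    obtain ⟨p, q, hq, hpq, hp, hnq⟩ := lc_cross (fun a => LC Q (c u) a)
      (nbh_conn hh (E.A_conn hadj) _ hcu _ hcw) Relation.ReflTransGen.refl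
      (fun hc => (LC.symm huQ hc).2.2 (cS w))
    have hqS : q ∈ S w := by
      by_contra hqS
      exact hnq (hp.tail ⟨⟨hq, hqS⟩, hpq⟩)
    have QY : Q ⊆ Y u := by
      rintro a ⟨ha1, ha2⟩
      by_cases haS : ∃ z, a ∈ S z
      · obtain ⟨z, hz⟩ := haS
        by_cases hzu : z = u
        · subst hzu; exact Or.inl hz
        · have hzw : z ≠ w := by rintro rfl; exact ha2 hz
          obtain ⟨x, hx, hd⟩ := ha1
          have h1 := hr2 u w z hadj hzu hzw x hx
          have h2 := Sd z a hz
          have h3 := dist_triangle_left (E.pos z) x (lpt h a)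
          linarith
      · exact Or.inr ⟨w, hadj, hlt, ha1, fun hc => haS (Set.mem_iUnion.1 hc)⟩
    have hpF : p ∈ F u := hp.mono QY
    exact ⟨hadj.ne, p, q, hpq, hL u p hpF, hL w q (SF w hqS)⟩
  intro u w hadj
  rcases lt_trichotomy (Fintype.equivFin V u) (Fintype.equivFin V w) with h1 | h1 | h1
  · exact key u w hadj h1
  · exact absurd ((Fintype.equivFin V).injective h1) hadj.ne
  · exact (key w u hadj.symm h1).symm

/-- Theorem 1.1: any connected planar graph on at least 2 vertices has 3-surviving rate
greater than `2/21`. -/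
theorem surviving_rate_three_planar {V : Type} [Fintype V] (G : SimpleGraph V)
    (hconn : G.Connected) (hplanar : IsPlanar G)
    (hn : 2 ≤ Fintype.card V) :
    survivingRate G (fun _ => 3) > 2 / 21 := by
  haveI : Nonempty V := hconn.nonempty
  obtain ⟨E⟩ := hplanar
  obtain ⟨L, hL⟩ := exists_lab G E
  exact main_of_lab L G hL hconn hn
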